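/- arXiv:2105.09960 — 4 statements merged into one kernel-verified Lean document; each statement's English description precedes it below -/
import Mathlib

section
/- Let Λ be a finite set of sites with Hilbert space ℋ = ⊗_{x∈Λ} ℂ². Let H = ∑_{i<j} H_{ij} be a 2-local Hamiltonian, where each H_{ij} is an operator supported exactly on the sites {i,j}: it acts as the identity on all sites outside {i,j} and its partial trace over site i and its partial trace over site j both vanish. Then for every nonzero operator O on ℋ with operator norm ‖O‖_∞ ≤ 1, one has ‖HO‖_F ≤ 2e · ‖H‖_(2) · ‖O‖_F · (|ln ‖O‖_F| + 1). -/
open scoped Kronecker Matrix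

/-- The operator norm (largest singular value) of a complex matrix. -/
noncomputable def opNorm {n : Type*} [Fintype n] [DecidableEq n] (A : Matrix n n ℂ) : ℝ :=
  ‖Matrix.toEuclideanCLM (𝕜 := ℂ) A‖

/-- The normalized Frobenius norm `‖A‖_F = √(Tr(AᴴA)/Tr(I))`. -/
noncomputable def fnorm {n : Type*} [Fintype n] (A : Matrix n n ℂ) : ℝ :=
  Real.sqrt ((Aᴴ * A).trace.re / (Fintype.card n))

/-- An operator on the qubits labelled by `ι` is supported on the set `S` of sites if it is
(after reindexing along the tensor-factorization of the configuration space) of the form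
`B ⊗ 1`, i.e. it acts as the identity on all sites outside `S`. -/
def SupportedOn {ι : Type*} [Fintype ι] [DecidableEq ι] (S : Finset ι)
    (A : Matrix (ι → Fin 2) (ι → Fin 2) ℂ) : Prop :=
  ∃ B : Matrix ({x : ι // x ∈ S} → Fin 2) ({x : ι // x ∈ S} → Fin 2) ℂ,
    A = Matrix.reindex (Equiv.piEquivPiSubtypeProd (· ∈ S) fun _ => Fin 2).symm
          (Equiv.piEquivPiSubtypeProd (· ∈ S) fun _ => Fin 2).symm
          (B ⊗ₖ (1 : Matrix ({x : ι // ¬ x ∈ S} → Fin 2) ({x : ι // ¬ x ∈ S} → Fin 2) ℂ))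

/-- The partial trace of `A` over the qubit at site `x` vanishes. -/
def TracelessAt {ι : Type*} [Fintype ι] [DecidableEq ι] (x : ι)
    (A : Matrix (ι → Fin 2) (ι → Fin 2) ℂ) : Prop :=
  ∀ f g : ι → Fin 2,
    ∑ v : Fin 2, A (Function.update f x v) (Function.update g x v) = 0

/-!
The squared normalized Schatten norm of exponent `2m` is 2-uniformly smooth with constant `2m - 1`.
Splitting `H` at one site `x` into the terms acting trivially at `x` and the terms traceless at `x`,
between which the first-order term vanishes, and repeating this at every site, bounds it on a
`k`-local Hamiltonian by `(2m - 1) ^ k * ∑ ‖h i‖_∞ ^ 2`. By Hölder's inequality and `‖O‖_∞ ≤ 1`,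
`‖H O‖_F ^ 2` is at most this times `‖O‖_F ^ (2 - 2 / m)`, and `m ≈ |log ‖O‖_F|` makes the loss
`‖O‖_F ^ (-2 / m)` at most `e ^ 2`. Uniform smoothness itself is a second-derivative bound along
`X + tY` for Hermitian `X`, `Y`, and the general case follows by Hermitian dilation.
-/

open Matrix Finset

open scoped ComplexOrder Matrix.Norms.L2Operator

section Calculus

theorem hasDerivAt_add_smul {E : Type*} [NormedAddCommGroup E] [NormedSpace ℝ E] (x y : E) (t : ℝ) :
    HasDerivAt (fun t : ℝ ↦ x + t • y) y t := by
  simpa using ((hasDerivAt_id t).smul_const y).const_add x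

theorem le_quadratic_of_deriv2_le {g g' g'' : ℝ → ℝ} {K t : ℝ}
    (hg : ∀ t, HasDerivAt g (g' t) t) (hg' : ∀ t, HasDerivAt g' (g'' t) t)
    (hK : ∀ t, g'' t ≤ K) (ht : 0 ≤ t) :
    g t ≤ g 0 + g' 0 * t + K / 2 * t ^ 2 := by
  have hlin : ∀ u, HasDerivAt (fun u ↦ g' 0 + K * u) K u := fun u ↦ by
    simpa using ((hasDerivAt_id u).const_mul K).const_add (g' 0)
  have hquad : ∀ u, HasDerivAt (fun u ↦ g 0 + g' 0 * u + K / 2 * u ^ 2) (g' 0 + K * u) u :=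
    fun u ↦ by
      refine ((((hasDerivAt_id u).const_mul (g' 0)).const_add (g 0)).add
        ((hasDerivAt_pow 2 u).const_mul (K / 2))).congr_deriv ?_
      push_cast
      ring
  have hg'_le : ∀ u, 0 ≤ u → g' u ≤ g' 0 + K * u := fun u hu ↦
    image_le_of_deriv_right_le_deriv_boundary
      (fun x _ ↦ (hg' x).continuousAt.continuousWithinAt) (fun x _ ↦ (hg' x).hasDerivWithinAt)
      (by simp) (fun x _ ↦ (hlin x).continuousAt.continuousWithinAt)
      (fun x _ ↦ (hlin x).hasDerivWithinAt) (fun x _ ↦ hK x) (Set.right_mem_Icc.2 hu)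
  exact image_le_of_deriv_right_le_deriv_boundary
    (fun x _ ↦ (hg x).continuousAt.continuousWithinAt) (fun x _ ↦ (hg x).hasDerivWithinAt)
    (by simp) (fun x _ ↦ (hquad x).continuousAt.continuousWithinAt)
    (fun x _ ↦ (hquad x).hasDerivWithinAt) (fun x hx ↦ hg'_le x hx.1) (Set.right_mem_Icc.2 ht)

theorem rpow_le_quadratic_of_deriv2_le {φ φ' φ'' : ℝ → ℝ} {s C t : ℝ} (hs : 0 ≤ s) (hs1 : s ≤ 1)
    (hφ : ∀ t, HasDerivAt φ (φ' t) t) (hφ' : ∀ t, HasDerivAt φ' (φ'' t) t)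
    (hpos : ∀ t, 0 < φ t) (h0 : φ' 0 = 0) (hC : ∀ t, φ'' t ≤ C * φ t ^ (1 - s)) (ht : 0 ≤ t) :
    φ t ^ s ≤ φ 0 ^ s + s * C / 2 * t ^ 2 := by
  have hderiv : ∀ u, HasDerivAt (fun u ↦ φ u ^ s) (φ' u * s * φ u ^ (s - 1)) u := fun u ↦
    (hφ u).rpow_const (Or.inl (hpos u).ne')
  have hderiv2 : ∀ u, HasDerivAt (fun u ↦ φ' u * s * φ u ^ (s - 1))
      (φ'' u * s * φ u ^ (s - 1) + φ' u * s * (φ' u * (s - 1) * φ u ^ (s - 1 - 1))) u := fun u ↦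
    ((hφ' u).mul_const s).fun_mul ((hφ u).rpow_const (Or.inl (hpos u).ne'))
  have hle : ∀ u, φ'' u * s * φ u ^ (s - 1) + φ' u * s * (φ' u * (s - 1) * φ u ^ (s - 1 - 1))
      ≤ s * C := fun u ↦ by
    have hfirst : φ'' u * φ u ^ (s - 1) ≤ C :=
      calc φ'' u * φ u ^ (s - 1) ≤ C * φ u ^ (1 - s) * φ u ^ (s - 1) := by
            gcongr
            · exact Real.rpow_nonneg (hpos u).le _
            · exact hC u
        _ = C := by rw [mul_assoc, ← Real.rpow_add (hpos u)]; simp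
    have hsecond : 0 ≤ s * (1 - s) * φ' u ^ 2 * φ u ^ (s - 1 - 1) :=
      mul_nonneg (mul_nonneg (mul_nonneg hs (sub_nonneg.2 hs1)) (sq_nonneg _))
        (Real.rpow_nonneg (hpos u).le _)
    linarith [mul_le_mul_of_nonneg_left hfirst hs]
  simpa [h0] using le_quadratic_of_deriv2_le hderiv hderiv2 hle ht

end Calculus

section NormTrace

variable {n : Type*} [Fintype n]

/-- The real part of the normalized trace `Tr A / Tr 1`, as a real-linear functional. -/
noncomputable def normTrace : Matrix n n ℂ →ₗ[ℝ] ℝ :=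
  (Fintype.card n : ℝ)⁻¹ • Complex.reLm ∘ₗ (traceLinearMap n ℂ ℂ).restrictScalars ℝ

theorem normTrace_apply (A : Matrix n n ℂ) :
    normTrace A = A.trace.re / Fintype.card n := by
  simp [normTrace, div_eq_inv_mul]

theorem normTrace_mul_comm (A B : Matrix n n ℂ) : normTrace (A * B) = normTrace (B * A) := by
  rw [normTrace_apply, normTrace_apply, trace_mul_comm]

theorem normTrace_conjTranspose (A : Matrix n n ℂ) : normTrace Aᴴ = normTrace A := by
  simp [normTrace_apply, trace_conjTranspose]

theorem normTrace_one_le [DecidableEq n] : normTrace (1 : Matrix n n ℂ) ≤ 1 := by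
  simpa [normTrace_apply] using div_self_le_one (Fintype.card n : ℝ)

theorem normTrace_nonneg {A : Matrix n n ℂ} (hA : A.PosSemidef) : 0 ≤ normTrace A := by
  rw [normTrace_apply]
  exact div_nonneg (Complex.le_def.1 hA.trace_nonneg).1 (Nat.cast_nonneg _)

theorem normTrace_conjTranspose_mul_self_pos {A : Matrix n n ℂ} (hA : A ≠ 0) :
    0 < normTrace (Aᴴ * A) := by
  have hpos : 0 < (Aᴴ * A).trace :=
    (posSemidef_conjTranspose_mul_self A).trace_nonneg.lt_of_ne'
      (trace_conjTranspose_mul_self_eq_zero_iff.not.2 hA)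
  have : Nonempty n := not_isEmpty_iff.1 fun _ ↦ hA (Subsingleton.elim _ _)
  rw [normTrace_apply]
  exact div_pos (Complex.lt_def.1 hpos).1 (Nat.cast_pos.2 Fintype.card_pos)

theorem fnorm_sq (A : Matrix n n ℂ) : fnorm A ^ 2 = normTrace (Aᴴ * A) := by
  have hnonneg := normTrace_nonneg (posSemidef_conjTranspose_mul_self A)
  rw [normTrace_apply] at hnonneg ⊢
  exact Real.sq_sqrt hnonneg

theorem fnorm_pos {A : Matrix n n ℂ} (hA : A ≠ 0) : 0 < fnorm A :=
  Real.sqrt_pos.2 (normTrace_apply (Aᴴ * A) ▸ normTrace_conjTranspose_mul_self_pos hA)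

theorem hasDerivAt_normTrace {M : ℝ → Matrix n n ℂ} {M' : Matrix n n ℂ} {t : ℝ}
    (hM : HasDerivAt M M' t) : HasDerivAt (fun t ↦ normTrace (M t)) (normTrace M') t := by
  classical
  have h := (LinearMap.toContinuousLinearMap (normTrace (n := n))).hasFDerivAt.comp_hasDerivAt t hM
  exact h

variable [DecidableEq n]

theorem eq_zero_of_isHermitian_of_pow_eq_zero {A : Matrix n n ℂ} (hA : A.IsHermitian) {k : ℕ}
    (h : A ^ k = 0) : A = 0 := by
  have hpow : ‖A ^ 2 ^ k‖ = ‖A‖ ^ 2 ^ k := IsSelfAdjoint.norm_pow_two_pow hA k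
  rw [pow_eq_zero_of_le k.lt_two_pow_self.le h, norm_zero] at hpow
  exact norm_eq_zero.1 (pow_eq_zero_iff (by positivity) |>.1 hpow.symm)

theorem normTrace_pow_two_mul_pos {A : Matrix n n ℂ} (hA : A.IsHermitian) (hA0 : A ≠ 0) (m : ℕ) :
    0 < normTrace (A ^ (2 * m)) := by
  have hpow : A ^ (2 * m) = (A ^ m)ᴴ * A ^ m := by rw [(hA.pow m).eq, ← pow_add, two_mul]
  rw [hpow]
  exact normTrace_conjTranspose_mul_self_pos
    (mt (eq_zero_of_isHermitian_of_pow_eq_zero hA) hA0)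

theorem hasDerivAt_normTrace_pow {M : ℝ → Matrix n n ℂ} {M' : Matrix n n ℂ} {t : ℝ}
    (hM : HasDerivAt M M' t) (k : ℕ) :
    HasDerivAt (fun t ↦ normTrace (M t ^ (k + 1))) ((k + 1) * normTrace (M t ^ k * M')) t := by
  refine (hasDerivAt_normTrace (hM.fun_pow' (k + 1))).congr_deriv ?_
  have hterm : ∀ i ∈ range (k + 1),
      normTrace (M t ^ ((k + 1).pred - i) * M' * M t ^ i) = normTrace (M t ^ k * M') := by
    intro i hi
    rw [normTrace_mul_comm, ← mul_assoc, ← pow_add, Nat.pred_succ,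
      Nat.add_sub_cancel' (mem_range_succ_iff.1 hi)]
  rw [map_sum, sum_congr rfl hterm]
  simp

theorem hasDerivAt_normTrace_pow_mul {M : ℝ → Matrix n n ℂ} {M' : Matrix n n ℂ} {t : ℝ}
    (hM : HasDerivAt M M' t) (B : Matrix n n ℂ) (k : ℕ) :
    HasDerivAt (fun t ↦ normTrace (M t ^ k * B))
      (∑ i ∈ range k, normTrace (M t ^ (k - 1 - i) * M' * M t ^ i * B)) t := by
  refine (hasDerivAt_normTrace ((hM.fun_pow' k).mul_const B)).congr_deriv ?_
  rw [sum_mul, map_sum]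
  rfl

end NormTrace

section OpNorm

variable {n : Type*} [Fintype n] [DecidableEq n]

theorem opNorm_eq_norm (A : Matrix n n ℂ) : opNorm A = ‖A‖ := rfl

theorem eigenvalues_le_opNorm {A : Matrix n n ℂ} (hA : A.IsHermitian) (i : n) :
    hA.eigenvalues i ≤ opNorm A := by
  have : Nonempty n := ⟨i⟩
  rw [opNorm_eq_norm]
  exact (le_abs_self _).trans (spectrum.norm_le_norm_of_mem (hA.eigenvalues_mem_spectrum_real i))

theorem opNorm_conjTranspose_mul_self (A : Matrix n n ℂ) : opNorm (Aᴴ * A) = opNorm A ^ 2 := by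
  rw [opNorm_eq_norm, l2_opNorm_conjTranspose_mul_self, ← sq, opNorm_eq_norm]

theorem opNorm_mul_conjTranspose_self (A : Matrix n n ℂ) : opNorm (A * Aᴴ) = opNorm A ^ 2 := by
  have h := opNorm_conjTranspose_mul_self Aᴴ
  rwa [conjTranspose_conjTranspose, opNorm_eq_norm Aᴴ, l2_opNorm_conjTranspose,
    ← opNorm_eq_norm] at h

end OpNorm

section Spectral

variable {n : Type*} [Fintype n] [DecidableEq n]

theorem pow_eq_eigenvectorUnitary_mul_diagonal {A : Matrix n n ℂ} (hA : A.IsHermitian) (k : ℕ) :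
    A ^ k = (hA.eigenvectorUnitary : Matrix n n ℂ) * diagonal (fun i ↦ (hA.eigenvalues i : ℂ) ^ k) *
      (hA.eigenvectorUnitary : Matrix n n ℂ)ᴴ := by
  conv_lhs => rw [hA.spectral_theorem]
  rw [← map_pow, diagonal_pow, Unitary.conjStarAlgAut_apply, star_eq_conjTranspose]
  rfl

theorem exists_normTrace_pow_mul_mul_pow_mul_eq_sum {A B : Matrix n n ℂ} (hA : A.IsHermitian)
    (hB : B.IsHermitian) (Y : Matrix n n ℂ) :
    ∃ w : n × n → ℝ, (∀ x, 0 ≤ w x) ∧ ∀ i j : ℕ, normTrace (A ^ i * Y * B ^ j * Yᴴ) =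
      ∑ x, w x * (hA.eigenvalues x.1 ^ i * hB.eigenvalues x.2 ^ j) := by
  set U := (hA.eigenvectorUnitary : Matrix n n ℂ) with hU
  set V := (hB.eigenvectorUnitary : Matrix n n ℂ) with hV
  set Z := Uᴴ * Y * V with hZ
  refine ⟨fun x ↦ Complex.normSq (Z x.1 x.2) / Fintype.card n,
    fun x ↦ div_nonneg (Complex.normSq_nonneg _) (Nat.cast_nonneg _), fun i j ↦ ?_⟩
  have htrace : (A ^ i * Y * B ^ j * Yᴴ).trace =
      (diagonal (fun k ↦ (hA.eigenvalues k : ℂ) ^ i) * Z *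
        (diagonal (fun k ↦ (hB.eigenvalues k : ℂ) ^ j) * Zᴴ)).trace := by
    rw [pow_eq_eigenvectorUnitary_mul_diagonal hA, pow_eq_eigenvectorUnitary_mul_diagonal hB,
      ← hU, ← hV, mul_assoc U, mul_assoc U, mul_assoc U, mul_assoc U, trace_mul_comm, hZ]
    simp only [conjTranspose_mul, conjTranspose_conjTranspose, mul_assoc]
  have hterm : ∀ k l, (hA.eigenvalues k : ℂ) ^ i * Z k l *
      ((hB.eigenvalues l : ℂ) ^ j * star (Z k l)) =
        (Complex.normSq (Z k l) * (hA.eigenvalues k ^ i * hB.eigenvalues l ^ j) : ℝ) := by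
    intro k l
    push_cast
    rw [← Complex.mul_conj, Complex.star_def]
    ring
  rw [normTrace_apply, htrace, Fintype.sum_prod_type]
  simp only [trace, diag_apply, mul_apply (M := _ * _), diagonal_mul, conjTranspose_apply, hterm,
    ← Complex.ofReal_sum, Complex.ofReal_re, sum_div, div_mul_eq_mul_div]

theorem pow_mul_pow_add_pow_mul_pow_le {a b : ℝ} {i j q : ℕ} (h : i + j = 2 * q) :
    a ^ i * b ^ j + b ^ i * a ^ j ≤ a ^ (2 * q) + b ^ (2 * q) := by
  have habs : 0 ≤ (|a| ^ i - |b| ^ i) * (|a| ^ j - |b| ^ j) := by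
    rcases le_total |a| |b| with hab | hba
    · exact mul_nonneg_of_nonpos_of_nonpos
        (sub_nonpos.2 (pow_le_pow_left₀ (abs_nonneg a) hab i))
        (sub_nonpos.2 (pow_le_pow_left₀ (abs_nonneg a) hab j))
    · exact mul_nonneg (sub_nonneg.2 (pow_le_pow_left₀ (abs_nonneg b) hba i))
        (sub_nonneg.2 (pow_le_pow_left₀ (abs_nonneg b) hba j))
  have hle : ∀ x y : ℝ, x ^ i * y ^ j ≤ |x| ^ i * |y| ^ j := fun x y ↦ by
    rw [← abs_pow, ← abs_pow, ← abs_mul]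
    exact le_abs_self _
  have heven : ∀ x : ℝ, x ^ (2 * q) = |x| ^ i * |x| ^ j := fun x ↦ by
    rw [← pow_add, h, (even_two_mul q).pow_abs]
  rw [heven, heven]
  linarith [hle a b, hle b a]

/- Both sides are symmetrised over the two powers of `A` using cyclicity of the trace; the
inequality then holds for each pair of eigenvalues. -/
theorem normTrace_pow_mul_mul_pow_mul_le {A Y : Matrix n n ℂ} (hA : A.IsHermitian)
    (hY : Y.IsHermitian) {i j q : ℕ} (h : i + j = 2 * q) :
    normTrace (A ^ i * Y * A ^ j * Y) ≤ normTrace (A ^ (2 * q) * Y ^ 2) := by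
  obtain ⟨w, hw, hsum⟩ := exists_normTrace_pow_mul_mul_pow_mul_eq_sum hA hA Y
  rw [hY.eq] at hsum
  have hcomm : ∀ i j, normTrace (A ^ i * Y * A ^ j * Y) = normTrace (A ^ j * Y * A ^ i * Y) :=
    fun i j ↦ by rw [mul_assoc _ (A ^ j), normTrace_mul_comm, ← mul_assoc]
  have hsymm : ∀ i j, 2 * normTrace (A ^ i * Y * A ^ j * Y) = ∑ x, w x *
      (hA.eigenvalues x.1 ^ i * hA.eigenvalues x.2 ^ j +
        hA.eigenvalues x.2 ^ i * hA.eigenvalues x.1 ^ j) := fun i j ↦ by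
    rw [two_mul]
    conv_lhs => arg 2; rw [hcomm]
    rw [hsum, hsum, ← sum_add_distrib]
    exact sum_congr rfl fun x _ ↦ by ring
  have hright : normTrace (A ^ (2 * q) * Y ^ 2) = normTrace (A ^ (2 * q) * Y * A ^ 0 * Y) := by
    rw [pow_zero, mul_one, sq, mul_assoc]
  refine le_of_mul_le_mul_left ?_ (two_pos (α := ℝ))
  rw [hright, hsymm, hsymm]
  refine sum_le_sum fun x _ ↦ mul_le_mul_of_nonneg_left ?_ (hw x)
  simpa using pow_mul_pow_add_pow_mul_pow_le h

theorem sum_mul_pow_mul_le_rpow_mul_rpow {α : Type*} (s : Finset α) {w u v : α → ℝ}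
    (hw : ∀ i, 0 ≤ w i) (hu : ∀ i, 0 ≤ u i) (hv : ∀ i, 0 ≤ v i) (q : ℕ) :
    ∑ i ∈ s, w i * (u i ^ q * v i) ≤
      (∑ i ∈ s, w i * u i ^ (q + 1)) ^ (1 - ((q + 1 : ℕ) : ℝ)⁻¹) *
        (∑ i ∈ s, w i * v i ^ (q + 1)) ^ ((q + 1 : ℕ) : ℝ)⁻¹ := by
  rcases eq_or_ne q 0 with rfl | hq
  · simp
  have hHolder := Real.inner_le_weight_mul_Lp_of_nonneg s (Nat.one_le_cast.2 q.succ_pos)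
    (fun i ↦ w i * u i ^ (q + 1)) (fun i ↦ v i / u i)
    (fun i ↦ mul_nonneg (hw i) (pow_nonneg (hu i) _)) (fun i ↦ div_nonneg (hv i) (hu i))
  have hleft : ∀ i, w i * (u i ^ q * v i) = w i * u i ^ (q + 1) * (v i / u i) := fun i ↦ by
    rcases eq_or_ne (u i) 0 with h0 | h0
    · simp [h0, hq]
    · field_simp
      ring
  have hright : ∀ i, w i * u i ^ (q + 1) * (v i / u i) ^ ((q + 1 : ℕ) : ℝ) ≤
      w i * v i ^ (q + 1) := fun i ↦ by
    rw [Real.rpow_natCast, mul_assoc, ← mul_pow]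
    refine mul_le_mul_of_nonneg_left (pow_le_pow_left₀ ?_ ?_ _) (hw i)
    · exact mul_nonneg (hu i) (div_nonneg (hv i) (hu i))
    · rcases eq_or_ne (u i) 0 with h0 | h0
      · simpa [h0] using hv i
      · exact (mul_div_cancel₀ (v i) h0).le
  rw [sum_congr rfl fun i _ ↦ hleft i]
  refine hHolder.trans (mul_le_mul_of_nonneg_left ?_ ?_)
  · refine Real.rpow_le_rpow (sum_nonneg fun i _ ↦ ?_) (sum_le_sum fun i _ ↦ hright i)
      (by positivity)
    exact mul_nonneg (mul_nonneg (hw i) (pow_nonneg (hu i) _))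
      (Real.rpow_nonneg (div_nonneg (hv i) (hu i)) _)
  · exact Real.rpow_nonneg (sum_nonneg fun i _ ↦ mul_nonneg (hw i) (pow_nonneg (hu i) _)) _

theorem exists_normTrace_pow_mul_pow_eq_sum {A B : Matrix n n ℂ} (hA : A.IsHermitian)
    (hB : B.IsHermitian) :
    ∃ w : n × n → ℝ, (∀ x, 0 ≤ w x) ∧ ∀ i j : ℕ, normTrace (A ^ i * B ^ j) =
      ∑ x, w x * (hA.eigenvalues x.1 ^ i * hB.eigenvalues x.2 ^ j) := by
  simpa using exists_normTrace_pow_mul_mul_pow_mul_eq_sum hA hB 1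

theorem normTrace_pow_mul_le_rpow_mul_rpow {P Q : Matrix n n ℂ} (hP : P.PosSemidef)
    (hQ : Q.PosSemidef) (q : ℕ) :
    normTrace (P ^ q * Q) ≤ normTrace (P ^ (q + 1)) ^ (1 - ((q + 1 : ℕ) : ℝ)⁻¹) *
      normTrace (Q ^ (q + 1)) ^ ((q + 1 : ℕ) : ℝ)⁻¹ := by
  obtain ⟨w, hw, hsum⟩ := exists_normTrace_pow_mul_pow_eq_sum hP.isHermitian hQ.isHermitian
  have hPQ := hsum q 1
  have hPow := hsum (q + 1) 0
  have hQow := hsum 0 (q + 1)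
  simp only [pow_zero, mul_one, one_mul, pow_one] at hPQ hPow hQow
  rw [hPQ, hPow, hQow]
  exact sum_mul_pow_mul_le_rpow_mul_rpow univ hw (fun x ↦ hP.eigenvalues_nonneg x.1)
    (fun x ↦ hQ.eigenvalues_nonneg x.2) q

theorem normTrace_mul_le_rpow_mul_rpow {P Q : Matrix n n ℂ} (hP : P.PosSemidef)
    (hP1 : opNorm P ≤ 1) (hQ : Q.PosSemidef) {m : ℕ} (hm : m ≠ 0) :
    normTrace (P * Q) ≤ normTrace P ^ (1 - (m : ℝ)⁻¹) * normTrace (Q ^ m) ^ (m : ℝ)⁻¹ := by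
  obtain ⟨w, hw, hsum⟩ := exists_normTrace_pow_mul_pow_eq_sum hP.isHermitian hQ.isHermitian
  have hPQ := hsum 1 1
  have hP' := hsum 1 0
  have hQ' := hsum 0 m
  simp only [pow_zero, mul_one, one_mul, pow_one] at hPQ hP' hQ'
  have hwP : ∀ x : n × n, 0 ≤ w x * hP.isHermitian.eigenvalues x.1 := fun x ↦
    mul_nonneg (hw x) (hP.eigenvalues_nonneg x.1)
  have hQm : ∀ x : n × n, 0 ≤ hQ.isHermitian.eigenvalues x.2 ^ m := fun x ↦
    pow_nonneg (hQ.eigenvalues_nonneg x.2) m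
  have hHolder := Real.inner_le_weight_mul_Lp_of_nonneg univ
    (Nat.one_le_cast.2 (Nat.one_le_iff_ne_zero.2 hm)) _ _ hwP
    (fun x ↦ hQ.eigenvalues_nonneg x.2)
  simp only [Real.rpow_natCast, mul_assoc] at hHolder
  rw [hPQ, hP', hQ']
  refine hHolder.trans (mul_le_mul_of_nonneg_left ?_ ?_)
  · refine Real.rpow_le_rpow ?_ (sum_le_sum fun x _ ↦ ?_) (by positivity)
    · exact sum_nonneg fun x _ ↦ (mul_assoc (w x) _ _).symm ▸ mul_nonneg (hwP x) (hQm x)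
    · exact mul_le_mul_of_nonneg_left (mul_le_of_le_one_left (hQm x)
        ((eigenvalues_le_opNorm hP.isHermitian x.1).trans hP1)) (hw x)
  · exact Real.rpow_nonneg (sum_nonneg fun x _ ↦ hwP x) _

end Spectral

section SchattenNorm

variable {n : Type*} [Fintype n] [DecidableEq n]

/-- The square of the normalized Schatten norm of exponent `2 * m`, that is
`(Tr (Aᴴ A) ^ m / Tr 1) ^ (1 / m)`, in which uniform smoothness is stated. -/
noncomputable def schattenSq (m : ℕ) (A : Matrix n n ℂ) : ℝ :=
  normTrace ((Aᴴ * A) ^ m) ^ (m : ℝ)⁻¹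

theorem schattenSq_nonneg (m : ℕ) (A : Matrix n n ℂ) : 0 ≤ schattenSq m A :=
  Real.rpow_nonneg (normTrace_nonneg ((posSemidef_conjTranspose_mul_self A).pow m)) _

theorem schattenSq_zero {m : ℕ} (hm : m ≠ 0) : schattenSq m (0 : Matrix n n ℂ) = 0 := by
  simp [schattenSq, hm]

theorem schattenSq_eq_of_isHermitian {A : Matrix n n ℂ} (hA : A.IsHermitian) (m : ℕ) :
    schattenSq m A = normTrace (A ^ (2 * m)) ^ (m : ℝ)⁻¹ := by
  rw [schattenSq, hA.eq, ← sq, ← pow_mul]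

theorem normTrace_pow_le_opNorm_pow {P : Matrix n n ℂ} (hP : P.PosSemidef) (m : ℕ) :
    normTrace (P ^ m) ≤ opNorm P ^ m := by
  obtain ⟨w, hw, hsum⟩ := exists_normTrace_pow_mul_pow_eq_sum hP.isHermitian isHermitian_one
  have hone := hsum 0 0
  have hpow := hsum m 0
  simp only [pow_zero, mul_one] at hone hpow
  calc normTrace (P ^ m) = ∑ x, w x * hP.isHermitian.eigenvalues x.1 ^ m := hpow
    _ ≤ ∑ x, w x * opNorm P ^ m := sum_le_sum fun x _ ↦ mul_le_mul_of_nonneg_left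
        (pow_le_pow_left₀ (hP.eigenvalues_nonneg x.1) (eigenvalues_le_opNorm _ x.1) m) (hw x)
    _ = normTrace (1 : Matrix n n ℂ) * opNorm P ^ m := by rw [← sum_mul, hone]
    _ ≤ opNorm P ^ m := mul_le_of_le_one_left (pow_nonneg (norm_nonneg _) m) normTrace_one_le

theorem schattenSq_le_opNorm_sq {m : ℕ} (hm : m ≠ 0) (A : Matrix n n ℂ) :
    schattenSq m A ≤ opNorm A ^ 2 := by
  have hA := posSemidef_conjTranspose_mul_self A
  calc schattenSq m A ≤ (opNorm (Aᴴ * A) ^ m) ^ (m : ℝ)⁻¹ :=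
        Real.rpow_le_rpow (normTrace_nonneg (hA.pow m)) (normTrace_pow_le_opNorm_pow hA m)
          (by positivity)
    _ = opNorm (Aᴴ * A) := Real.pow_rpow_inv_natCast (norm_nonneg _) hm
    _ = opNorm A ^ 2 := opNorm_conjTranspose_mul_self A

theorem normTrace_pow_mul_mul_pow_mul_le_schattenSq {A Y : Matrix n n ℂ} (hA : A.IsHermitian)
    (hY : Y.IsHermitian) {i j q : ℕ} (h : i + j = 2 * q) :
    normTrace (A ^ i * Y * A ^ j * Y) ≤
      schattenSq (q + 1) Y * normTrace (A ^ (2 * (q + 1))) ^ (1 - ((q + 1 : ℕ) : ℝ)⁻¹) := by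
  have hsq : ∀ {B : Matrix n n ℂ}, B.IsHermitian → (B ^ 2).PosSemidef := fun {B} hB ↦ by
    simpa [hB.eq, sq] using posSemidef_conjTranspose_mul_self B
  refine (normTrace_pow_mul_mul_pow_mul_le hA hY h).trans ?_
  rw [schattenSq_eq_of_isHermitian hY, mul_comm (normTrace _ ^ _), pow_mul, pow_mul, pow_mul]
  exact normTrace_pow_mul_le_rpow_mul_rpow (hsq hA) (hsq hY) q

theorem add_smul_ne_zero_of_normTrace_pow_mul_eq_zero {X Y : Matrix n n ℂ} (hX : X.IsHermitian)
    (hX0 : X ≠ 0) {q : ℕ} (h : normTrace (X ^ (2 * q + 1) * Y) = 0) (t : ℝ) : X + t • Y ≠ 0 := by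
  intro ht
  refine (normTrace_pow_two_mul_pos hX hX0 (q + 1)).ne' ?_
  calc normTrace (X ^ (2 * (q + 1))) = normTrace (X ^ (2 * q + 1) * (X + t • Y)) := by
        rw [Matrix.mul_add, mul_smul_comm, map_add, map_smul, h, smul_zero, add_zero, ← pow_succ]
        rfl
    _ = 0 := by rw [ht, mul_zero, map_zero]

theorem schattenSq_add_le_of_isHermitian {X Y : Matrix n n ℂ} (hX : X.IsHermitian)
    (hY : Y.IsHermitian) {q : ℕ} (h : normTrace (X ^ (2 * q + 1) * Y) = 0) :
    schattenSq (q + 1) (X + Y) ≤ schattenSq (q + 1) X + (2 * q + 1) * schattenSq (q + 1) Y := by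
  rcases eq_or_ne X 0 with rfl | hX0
  · rw [zero_add, schattenSq_zero q.succ_ne_zero, zero_add]
    exact le_mul_of_one_le_left (schattenSq_nonneg _ Y) (by linarith [Nat.cast_nonneg (α := ℝ) q])
  have hH : ∀ t : ℝ, (X + t • Y).IsHermitian := fun t ↦ hX.add (hY.smul (IsSelfAdjoint.all t))
  have hpos : ∀ t : ℝ, 0 < normTrace ((X + t • Y) ^ (2 * (q + 1))) := fun t ↦
    normTrace_pow_two_mul_pos (hH t) (add_smul_ne_zero_of_normTrace_pow_mul_eq_zero hX hX0 h t) _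
  have hφ : ∀ t : ℝ, HasDerivAt (fun t : ℝ ↦ normTrace ((X + t • Y) ^ (2 * (q + 1))))
      (((2 * q + 1 : ℕ) + 1) * normTrace ((X + t • Y) ^ (2 * q + 1) * Y)) t := fun t ↦
    hasDerivAt_normTrace_pow (hasDerivAt_add_smul X Y t) (2 * q + 1)
  have hφ' := fun t : ℝ ↦ (hasDerivAt_normTrace_pow_mul (hasDerivAt_add_smul X Y t) Y
    (2 * q + 1)).const_mul (((2 * q + 1 : ℕ) : ℝ) + 1)
  have hφ''_le : ∀ t : ℝ, (((2 * q + 1 : ℕ) : ℝ) + 1) * ∑ i ∈ range (2 * q + 1),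
      normTrace ((X + t • Y) ^ (2 * q + 1 - 1 - i) * Y * (X + t • Y) ^ i * Y) ≤
        (2 * q + 2) * ((2 * q + 1) * schattenSq (q + 1) Y) *
          normTrace ((X + t • Y) ^ (2 * (q + 1))) ^ (1 - ((q + 1 : ℕ) : ℝ)⁻¹) := fun t ↦ by
    have hterm := fun i (hi : i ∈ range (2 * q + 1)) ↦
      normTrace_pow_mul_mul_pow_mul_le_schattenSq (hH t) hY (q := q)
        (Nat.sub_add_cancel (mem_range_succ_iff.1 hi))
    refine (mul_le_mul_of_nonneg_left (sum_le_card_nsmul _ _ _ hterm) (by positivity)).trans_eq ?_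
    rw [card_range, nsmul_eq_mul]
    push_cast
    ring
  have hs : ((q + 1 : ℕ) : ℝ)⁻¹ ≤ 1 := Nat.cast_inv_le_one (q + 1)
  have key := rpow_le_quadratic_of_deriv2_le (by positivity) hs hφ hφ' hpos (by simp [h]) hφ''_le
    zero_le_one
  simp only [one_smul, zero_smul, add_zero] at key
  rw [schattenSq_eq_of_isHermitian (hX.add hY), schattenSq_eq_of_isHermitian hX]
  refine key.trans_eq ?_
  push_cast
  field_simp

end SchattenNorm

section HermitianDilation

variable {n : Type*}

/-- The Hermitian matrix `[[0, X], [Xᴴ, 0]]`, through which statements about arbitrary matrices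
reduce to Hermitian ones. -/
def hermitianDilation (X : Matrix n n ℂ) : Matrix (n ⊕ n) (n ⊕ n) ℂ := fromBlocks 0 X Xᴴ 0

theorem isHermitian_hermitianDilation (X : Matrix n n ℂ) : (hermitianDilation X).IsHermitian := by
  simp [IsHermitian, hermitianDilation, fromBlocks_conjTranspose]

theorem hermitianDilation_add (X Y : Matrix n n ℂ) :
    hermitianDilation (X + Y) = hermitianDilation X + hermitianDilation Y := by
  simp [hermitianDilation, fromBlocks_add]

variable [Fintype n]

theorem normTrace_fromBlocks (A B C D : Matrix n n ℂ) :
    normTrace (fromBlocks A B C D) = (normTrace A + normTrace D) / 2 := by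
  simp only [normTrace_apply, trace, diag_apply, Fintype.sum_sum_type, fromBlocks_apply₁₁,
    fromBlocks_apply₂₂, Complex.add_re, Fintype.card_sum, Nat.cast_add]
  field_simp
  ring

variable [DecidableEq n]

theorem hermitianDilation_pow_two_mul (X : Matrix n n ℂ) (m : ℕ) :
    hermitianDilation X ^ (2 * m) = fromBlocks ((X * Xᴴ) ^ m) 0 0 ((Xᴴ * X) ^ m) := by
  have hsq : hermitianDilation X ^ 2 = fromBlocks (X * Xᴴ) 0 0 (Xᴴ * X) := by
    simp [sq, hermitianDilation, fromBlocks_multiply]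
  rw [pow_mul, hsq, fromBlocks_diagonal_pow]

theorem mul_conjTranspose_pow_mul (X : Matrix n n ℂ) (m : ℕ) :
    (X * Xᴴ) ^ m * X = X * (Xᴴ * X) ^ m :=
  have h : SemiconjBy X (Xᴴ * X) (X * Xᴴ) := (mul_assoc X Xᴴ X).symm
  (h.pow_right m).eq.symm

theorem normTrace_mul_conjTranspose_pow (X : Matrix n n ℂ) (m : ℕ) :
    normTrace ((X * Xᴴ) ^ m) = normTrace ((Xᴴ * X) ^ m) := by
  cases m with
  | zero => simp
  | succ m =>
    rw [pow_succ, ← mul_assoc, mul_conjTranspose_pow_mul, mul_assoc, normTrace_mul_comm, mul_assoc,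
      pow_succ]

theorem schattenSq_hermitianDilation (m : ℕ) (X : Matrix n n ℂ) :
    schattenSq m (hermitianDilation X) = schattenSq m X := by
  rw [schattenSq_eq_of_isHermitian (isHermitian_hermitianDilation X),
    hermitianDilation_pow_two_mul, normTrace_fromBlocks, normTrace_mul_conjTranspose_pow,
    add_self_div_two, schattenSq]

theorem normTrace_hermitianDilation_pow_mul (X Y : Matrix n n ℂ) (q : ℕ) :
    normTrace (hermitianDilation X ^ (2 * q + 1) * hermitianDilation Y) =
      normTrace ((Xᴴ * X) ^ q * Xᴴ * Y) := by
  have hconj : ((Xᴴ * X) ^ q * Xᴴ * Y)ᴴ = Yᴴ * ((X * Xᴴ) ^ q * X) := by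
    rw [mul_conjTranspose_pow_mul]
    simp [conjTranspose_mul, conjTranspose_pow]
  have hleft : normTrace ((X * Xᴴ) ^ q * X * Yᴴ) = normTrace ((Xᴴ * X) ^ q * Xᴴ * Y) := by
    rw [normTrace_mul_comm, ← hconj, normTrace_conjTranspose]
  rw [pow_succ, hermitianDilation_pow_two_mul, hermitianDilation, hermitianDilation,
    fromBlocks_multiply, fromBlocks_multiply, normTrace_fromBlocks]
  simp [hleft]

/-- Uniform smoothness; `h` says that the derivative of `schattenSq (q + 1)` at `X` in the direction
`Y` vanishes. -/
theorem schattenSq_add_le {X Y : Matrix n n ℂ} {q : ℕ}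
    (h : normTrace ((Xᴴ * X) ^ q * Xᴴ * Y) = 0) :
    schattenSq (q + 1) (X + Y) ≤ schattenSq (q + 1) X + (2 * q + 1) * schattenSq (q + 1) Y := by
  rw [← normTrace_hermitianDilation_pow_mul] at h
  simpa only [← hermitianDilation_add, schattenSq_hermitianDilation] using
    schattenSq_add_le_of_isHermitian (isHermitian_hermitianDilation X)
      (isHermitian_hermitianDilation Y) h

end HermitianDilation

section Hypercontractivity

variable {n Λ ι : Type*} [Fintype n] [DecidableEq n]

theorem schattenSq_sum_add_sum_le {𝒜 : StarSubalgebra ℂ (Matrix n n ℂ)} {s t : Finset ι}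
    {A : ι → Matrix n n ℂ} (hs : ∀ i ∈ s, A i ∈ 𝒜)
    (ht : ∀ i ∈ t, ∀ B ∈ 𝒜, normTrace (B * A i) = 0) (q : ℕ) :
    schattenSq (q + 1) (∑ i ∈ s, A i + ∑ i ∈ t, A i) ≤
      schattenSq (q + 1) (∑ i ∈ s, A i) + (2 * q + 1) * schattenSq (q + 1) (∑ i ∈ t, A i) := by
  have hX : ∑ i ∈ s, A i ∈ 𝒜 := sum_mem hs
  refine schattenSq_add_le ?_
  rw [mul_sum, map_sum]
  exact sum_eq_zero fun i hi ↦
    ht i hi _ (mul_mem (pow_mem (mul_mem (star_mem hX) hX) q) (star_mem hX))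

/- One site is treated at a time: at the site `x` the sum splits into the terms acting trivially
at `x` and the terms traceless at `x`, and only the latter acquire a factor `2 * q + 1`. -/
theorem schattenSq_sum_le_of_injOn_inter [DecidableEq Λ] {𝒜 : Λ → StarSubalgebra ℂ (Matrix n n ℂ)}
    {S : ι → Finset Λ} {A : ι → Matrix n n ℂ} (q : ℕ) (T : Finset Λ) (s : Finset ι)
    (hmem : ∀ i ∈ s, ∀ x ∉ S i, A i ∈ 𝒜 x)
    (htr : ∀ i ∈ s, ∀ x ∈ S i, ∀ B ∈ 𝒜 x, normTrace (B * A i) = 0)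
    (hS : Set.InjOn (fun i ↦ S i ∩ T) s) :
    schattenSq (q + 1) (∑ i ∈ s, A i) ≤
      ∑ i ∈ s, (2 * q + 1) ^ #(S i ∩ T) * schattenSq (q + 1) (A i) := by
  induction T using Finset.induction_on generalizing s with
  | empty =>
    rcases s.eq_empty_or_nonempty with rfl | ⟨i, hi⟩
    · simp [schattenSq_zero]
    · obtain rfl : s = {i} :=
        eq_singleton_iff_unique_mem.2 ⟨hi, fun j hj ↦ hS hj hi (by simp only [inter_empty])⟩
      simp
  | insert x T hx ih =>
    set s₀ := {i ∈ s | x ∉ S i}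
    set s₁ := {i ∈ s | x ∈ S i}
    have hinter₀ : ∀ i ∈ s₀, S i ∩ insert x T = S i ∩ T := fun i hi ↦
      inter_insert_of_notMem (mem_filter.1 hi).2
    have hinter₁ : ∀ i ∈ s₁, S i ∩ insert x T = insert x (S i ∩ T) := fun i hi ↦
      inter_insert_of_mem (mem_filter.1 hi).2
    have hle : ∀ t ⊆ s, Set.InjOn (fun i ↦ S i ∩ T) t → schattenSq (q + 1) (∑ i ∈ t, A i) ≤
        ∑ i ∈ t, (2 * q + 1) ^ #(S i ∩ T) * schattenSq (q + 1) (A i) := fun t hts ↦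
      ih t (fun i hi ↦ hmem i (hts hi)) (fun i hi ↦ htr i (hts hi))
    have hle₀ := hle s₀ (filter_subset _ s) fun i hi j hj hij ↦
      hS (mem_of_mem_filter i hi) (mem_of_mem_filter j hj)
        (by simpa only [hinter₀ i hi, hinter₀ j hj] using hij)
    have hle₁ := hle s₁ (filter_subset _ s) fun i hi j hj hij ↦
      hS (mem_of_mem_filter i hi) (mem_of_mem_filter j hj)
        (by simpa only [hinter₁ i hi, hinter₁ j hj] using congrArg (insert x) hij)
    calc schattenSq (q + 1) (∑ i ∈ s, A i)
        ≤ schattenSq (q + 1) (∑ i ∈ s₀, A i) +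
            (2 * q + 1) * schattenSq (q + 1) (∑ i ∈ s₁, A i) := by
          rw [← sum_filter_not_add_sum_filter s (x ∈ S ·)]
          exact schattenSq_sum_add_sum_le
            (fun i hi ↦ hmem i (mem_of_mem_filter i hi) x (mem_filter.1 hi).2)
            (fun i hi ↦ htr i (mem_of_mem_filter i hi) x (mem_filter.1 hi).2) q
      _ ≤ ∑ i ∈ s₀, (2 * q + 1) ^ #(S i ∩ T) * schattenSq (q + 1) (A i) +
            (2 * q + 1) * ∑ i ∈ s₁, (2 * q + 1) ^ #(S i ∩ T) * schattenSq (q + 1) (A i) := by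
          gcongr
      _ = ∑ i ∈ s, (2 * q + 1) ^ #(S i ∩ insert x T) * schattenSq (q + 1) (A i) := by
          rw [← sum_filter_not_add_sum_filter s (x ∈ S ·), mul_sum]
          refine congrArg₂ (· + ·) (sum_congr rfl fun i hi ↦ ?_) (sum_congr rfl fun i hi ↦ ?_)
          · rw [hinter₀ i hi]
          · rw [hinter₁ i hi, card_insert_of_notMem fun h ↦ hx (mem_inter.1 h).2, pow_succ']
            ring

theorem schattenSq_sum_le_of_card_le [Finite Λ]
    {𝒜 : Λ → StarSubalgebra ℂ (Matrix n n ℂ)} {s : Finset ι} {S : ι → Finset Λ}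
    {A : ι → Matrix n n ℂ} {k : ℕ} (hS : Set.InjOn S s) (hcard : ∀ i ∈ s, #(S i) ≤ k)
    (hmem : ∀ i ∈ s, ∀ x ∉ S i, A i ∈ 𝒜 x)
    (htr : ∀ i ∈ s, ∀ x ∈ S i, ∀ B ∈ 𝒜 x, normTrace (B * A i) = 0) (q : ℕ) :
    schattenSq (q + 1) (∑ i ∈ s, A i) ≤ (2 * q + 1) ^ k * ∑ i ∈ s, opNorm (A i) ^ 2 := by
  classical
  have := Fintype.ofFinite Λ
  refine (schattenSq_sum_le_of_injOn_inter q univ s hmem htr (by simpa using hS)).trans ?_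
  rw [mul_sum]
  gcongr with i hi
  · exact schattenSq_nonneg _ _
  · linarith [Nat.cast_nonneg (α := ℝ) q]
  · simpa using hcard i hi
  · exact schattenSq_le_opNorm_sq q.succ_ne_zero (A i)

end Hypercontractivity

section Sites

variable {Λ κ : Type*} [DecidableEq Λ]

theorem apply_eq_and_eq_update_comm {x : Λ} {u v : κ} {f g : Λ → κ} :
    f x = u ∧ g = Function.update f x v ↔ g x = v ∧ f = Function.update g x u := by
  constructor <;> rintro ⟨rfl, rfl⟩ <;> simp

variable [Fintype Λ] [DecidableEq κ]

/-- The operator `|u⟩⟨v|` on the tensor factor at the site `x`, tensored with the identity on the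
other factors. -/
def siteUnit (x : Λ) (u v : κ) : Matrix (Λ → κ) (Λ → κ) ℂ :=
  of fun f g ↦ if f x = u ∧ g = Function.update f x v then 1 else 0

theorem conjTranspose_siteUnit (x : Λ) (u v : κ) : (siteUnit x u v)ᴴ = siteUnit x v u := by
  ext f g
  simp [siteUnit, apply_eq_and_eq_update_comm (f := f), apply_ite]

variable [Fintype κ]

/-- The operators acting trivially at the site `x`, encoded as those commuting with all operators
that act at `x` only. -/
def siteCommutant (κ : Type*) [Fintype κ] [DecidableEq κ] (x : Λ) :
    StarSubalgebra ℂ (Matrix (Λ → κ) (Λ → κ) ℂ) :=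
  StarSubalgebra.centralizer ℂ (Set.range fun p : κ × κ ↦ siteUnit x p.1 p.2)

theorem siteUnit_mul_apply (x : Λ) (u v : κ) (B : Matrix (Λ → κ) (Λ → κ) ℂ) (f g : Λ → κ) :
    (siteUnit x u v * B) f g = if f x = u then B (Function.update f x v) g else 0 := by
  simp [siteUnit, mul_apply, ite_and]

theorem mul_siteUnit_apply (x : Λ) (u v : κ) (B : Matrix (Λ → κ) (Λ → κ) ℂ) (f g : Λ → κ) :
    (B * siteUnit x u v) f g = if g x = v then B f (Function.update g x u) else 0 := by
  simp only [siteUnit, mul_apply, of_apply, apply_eq_and_eq_update_comm (g := g)]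
  simp [ite_and]

theorem mem_siteCommutant_iff {x : Λ} {A : Matrix (Λ → κ) (Λ → κ) ℂ} :
    A ∈ siteCommutant κ x ↔ ∀ u v, siteUnit x u v * A = A * siteUnit x u v := by
  simp only [siteCommutant, StarSubalgebra.mem_centralizer_iff, Set.forall_mem_range, Prod.forall,
    star_eq_conjTranspose, conjTranspose_siteUnit]
  exact ⟨fun h u v ↦ (h u v).1, fun h u v ↦ ⟨h u v, h v u⟩⟩

theorem sum_siteUnit_mul_siteUnit (x : Λ) (u : κ) :
    ∑ v, siteUnit x v u * siteUnit x u v = (1 : Matrix (Λ → κ) (Λ → κ) ℂ) := by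
  ext f g
  simp only [Matrix.sum_apply, siteUnit_mul_apply]
  simp [siteUnit, one_apply, eq_comm]

theorem siteUnit_mul_mul_siteUnit_apply (x : Λ) (u v : κ) (B : Matrix (Λ → κ) (Λ → κ) ℂ)
    (f g : Λ → κ) : (siteUnit x u v * B * siteUnit x v u) f g =
      if f x = u ∧ g x = u then B (Function.update f x v) (Function.update g x v) else 0 := by
  rw [mul_siteUnit_apply, siteUnit_mul_apply]
  split_ifs <;> simp_all

theorem trace_mul_eq_zero_of_mem_siteCommutant {x : Λ} {A B : Matrix (Λ → κ) (Λ → κ) ℂ}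
    (hA : A ∈ siteCommutant κ x)
    (hB : ∀ f g, ∑ v, B (Function.update f x v) (Function.update g x v) = 0) :
    (A * B).trace = 0 := by
  rcases isEmpty_or_nonempty κ with hκ | ⟨⟨u⟩⟩
  · have : IsEmpty (Λ → κ) := ⟨fun f ↦ hκ.elim (f x)⟩
    simp [trace]
  have hsum : ∑ v, siteUnit x u v * B * siteUnit x v u = 0 := by
    ext f g
    simp only [Matrix.sum_apply, siteUnit_mul_mul_siteUnit_apply, Matrix.zero_apply]
    split_ifs
    exacts [hB f g, sum_const_zero]
  calc (A * B).trace = ∑ v, (A * (siteUnit x v u * siteUnit x u v) * B).trace := by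
        rw [← trace_sum, ← sum_mul, ← mul_sum, sum_siteUnit_mul_siteUnit, mul_one]
    _ = ∑ v, (A * (siteUnit x u v * B * siteUnit x v u)).trace := by
        refine sum_congr rfl fun v _ ↦ ?_
        rw [← mul_assoc, ← mem_siteCommutant_iff.1 hA, mul_assoc, mul_assoc, trace_mul_comm]
        simp only [mul_assoc]
    _ = 0 := by rw [← trace_sum, ← mul_sum, hsum, mul_zero, trace_zero]

end Sites

section Qubits

variable {Λ : Type*} [Fintype Λ] [DecidableEq Λ]

theorem SupportedOn.exists_apply_eq {S : Finset Λ} {A : Matrix (Λ → Fin 2) (Λ → Fin 2) ℂ}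
    (hA : SupportedOn S A) : ∃ B : Matrix (S → Fin 2) (S → Fin 2) ℂ, ∀ f g,
      A f g = if ∀ y ∉ S, f y = g y then B (S.restrict f) (S.restrict g) else 0 := by
  obtain ⟨B, rfl⟩ := hA
  refine ⟨B, fun f g ↦ ?_⟩
  simp only [reindex_apply, Equiv.symm_symm, submatrix_apply, kroneckerMap_apply, one_apply,
    mul_ite, mul_one, mul_zero, funext_iff, Subtype.forall]
  rfl

theorem SupportedOn.mem_siteCommutant {S : Finset Λ} {A : Matrix (Λ → Fin 2) (Λ → Fin 2) ℂ}
    (hA : SupportedOn S A) {x : Λ} (hx : x ∉ S) : A ∈ siteCommutant (Fin 2) x := by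
  obtain ⟨B, hB⟩ := hA.exists_apply_eq
  refine mem_siteCommutant_iff.2 fun u v ↦ ?_
  ext f g
  have hrestrict : ∀ (f : Λ → Fin 2) w, S.restrict (Function.update f x w) = S.restrict f :=
    fun f w ↦ funext fun y ↦ by
      simp [restrict, Function.update_of_ne (ne_of_mem_of_not_mem y.2 hx)]
  have hagree : (f x = u ∧ ∀ y ∉ S, Function.update f x v y = g y) ↔
      (g x = v ∧ ∀ y ∉ S, f y = Function.update g x u y) := by
    constructor <;> rintro ⟨rfl, h⟩ <;>
      refine ⟨by simpa [eq_comm] using h x hx, fun y hy ↦ ?_⟩ <;>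
      rcases eq_or_ne y x with rfl | hyx
    all_goals first | simp | simpa [hyx] using h y hy
  simp only [siteUnit_mul_apply, mul_siteUnit_apply, hB, hrestrict, ← ite_and, hagree]

end Qubits

section Submultiplicativity

theorem sq_rpow_one_sub_inv_le {F m : ℝ} (hF : 0 < F) (hm : 0 < m) (h : |Real.log F| ≤ m) :
    (F ^ 2) ^ (1 - m⁻¹) ≤ (Real.exp 1 * F) ^ 2 := by
  have hlog : -Real.log F * m⁻¹ ≤ 1 := by
    rw [← div_eq_mul_inv, div_le_one hm]
    exact (neg_le_abs _).trans h
  calc (F ^ 2) ^ (1 - m⁻¹) = Real.exp (2 * (-Real.log F * m⁻¹)) * F ^ 2 := by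
        rw [sub_eq_neg_add, Real.rpow_add (by positivity), Real.rpow_one,
          Real.rpow_def_of_pos (by positivity), Real.log_pow]
        push_cast
        ring_nf
    _ ≤ Real.exp 2 * F ^ 2 := by
        gcongr
        linarith
    _ = (Real.exp 1 * F) ^ 2 := by rw [mul_pow, ← Real.exp_nat_mul]; norm_num

theorem fnorm_mul_sq_le {n : Type*} [Fintype n] [DecidableEq n] (H : Matrix n n ℂ)
    {O : Matrix n n ℂ} (hO : opNorm O ≤ 1) {m : ℕ} (hm : m ≠ 0) :
    fnorm (H * O) ^ 2 ≤ (fnorm O ^ 2) ^ (1 - (m : ℝ)⁻¹) * schattenSq m H := by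
  have hOO : opNorm (O * Oᴴ) ≤ 1 := by
    rw [opNorm_mul_conjTranspose_self]
    exact pow_le_one₀ (norm_nonneg _) hO
  calc fnorm (H * O) ^ 2 = normTrace (O * Oᴴ * (Hᴴ * H)) := by
        rw [fnorm_sq, conjTranspose_mul, ← mul_assoc, normTrace_mul_comm]
        simp only [mul_assoc]
    _ ≤ normTrace (O * Oᴴ) ^ (1 - (m : ℝ)⁻¹) * schattenSq m H :=
        normTrace_mul_le_rpow_mul_rpow (posSemidef_self_mul_conjTranspose O) hOO
          (posSemidef_conjTranspose_mul_self H) hm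
    _ = (fnorm O ^ 2) ^ (1 - (m : ℝ)⁻¹) * schattenSq m H := by rw [fnorm_sq, normTrace_mul_comm]

theorem injOn_pair_setOf_lt {α : Type*} [DecidableEq α] [Preorder α] :
    Set.InjOn (fun p : α × α ↦ ({p.1, p.2} : Finset α)) {p | p.1 < p.2} := by
  rintro ⟨a, b⟩ hab ⟨c, d⟩ hcd h
  rcases Set.pair_eq_pair_iff.1 (by simpa using congrArg (fun s : Finset α ↦ (s : Set α)) h) with
    ⟨rfl, rfl⟩ | ⟨rfl, rfl⟩
  · rfl
  · exact absurd hab (lt_asymm hcd)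

theorem frobenius_submultiplicativity_general {Λ κ ι : Type*} [Fintype Λ] [DecidableEq Λ]
    [Fintype κ] [DecidableEq κ] {s : Finset ι} {S : ι → Finset Λ}
    {h : ι → Matrix (Λ → κ) (Λ → κ) ℂ} {k : ℕ} (hS : Set.InjOn S s)
    (hcard : ∀ i ∈ s, #(S i) ≤ k) (hsupp : ∀ i ∈ s, ∀ x ∉ S i, h i ∈ siteCommutant κ x)
    (htr : ∀ i ∈ s, ∀ x ∈ S i, ∀ f g,
      ∑ v, h i (Function.update f x v) (Function.update g x v) = 0)
    {O : Matrix (Λ → κ) (Λ → κ) ℂ} (hO : O ≠ 0) (hOnorm : opNorm O ≤ 1) :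
    fnorm ((∑ i ∈ s, h i) * O) ≤ Real.exp 1 * √(2 * (|Real.log (fnorm O)| + 1)) ^ k *
      √(∑ i ∈ s, opNorm (h i) ^ 2) * fnorm O := by
  set L := |Real.log (fnorm O)|
  set q := ⌊L⌋₊
  have hL0 : 0 ≤ L := abs_nonneg _
  have hq : (q : ℝ) ≤ L := Nat.floor_le hL0
  have hLq : L ≤ (q + 1 : ℕ) := by exact_mod_cast (Nat.lt_floor_add_one L).le
  have hF := fnorm_pos hO
  have hS0 : 0 ≤ ∑ i ∈ s, opNorm (h i) ^ 2 := sum_nonneg fun i _ ↦ sq_nonneg _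
  have hHolder := fnorm_mul_sq_le (∑ i ∈ s, h i) hOnorm q.succ_ne_zero
  have hpow := sq_rpow_one_sub_inv_le hF (by positivity) hLq
  have hmoment := schattenSq_sum_le_of_card_le hS hcard hsupp
    (fun i hi x hx B hB ↦ by
      rw [normTrace_apply, trace_mul_eq_zero_of_mem_siteCommutant hB (htr i hi x hx),
        Complex.zero_re, zero_div]) q
  have hsqrt : (√(2 * (L + 1)) ^ k) ^ 2 = (2 * (L + 1)) ^ k := by
    rw [pow_right_comm, Real.sq_sqrt (by positivity)]
  refine le_of_sq_le_sq ?_ (by positivity)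
  calc fnorm ((∑ i ∈ s, h i) * O) ^ 2
      ≤ (fnorm O ^ 2) ^ (1 - ((q + 1 : ℕ) : ℝ)⁻¹) * schattenSq (q + 1) (∑ i ∈ s, h i) := hHolder
    _ ≤ (Real.exp 1 * fnorm O) ^ 2 * ((2 * q + 1) ^ k * ∑ i ∈ s, opNorm (h i) ^ 2) :=
        mul_le_mul hpow hmoment (schattenSq_nonneg _ _) (sq_nonneg _)
    _ ≤ (Real.exp 1 * fnorm O) ^ 2 * ((2 * (L + 1)) ^ k * ∑ i ∈ s, opNorm (h i) ^ 2) := by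
        gcongr
        linarith
    _ = (Real.exp 1 * √(2 * (L + 1)) ^ k * √(∑ i ∈ s, opNorm (h i) ^ 2) * fnorm O) ^ 2 := by
        conv_lhs => rw [← hsqrt, ← Real.sq_sqrt hS0]
        ring

end Submultiplicativity

/-- **Lemma 1 (approximate submultiplicativity of the Frobenius norm).**
For a 2-local Hamiltonian `H = ∑_{i<j} H_{ij}`, with each `H_{ij}` supported exactly on the
sites `{i,j}` (acting as the identity elsewhere, with vanishing partial trace over each of
`i` and `j`), and any operator `O ≠ 0` with `‖O‖_∞ ≤ 1`,
`‖HO‖_F ≤ 2e·‖H‖_(2)·‖O‖_F·(|ln ‖O‖_F| + 1)` where `‖H‖_(2) = √(∑_{i<j} ‖H_{ij}‖_∞²)`. -/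
theorem frobenius_submultiplicativity
    {Λ : Type*} [Fintype Λ] [DecidableEq Λ] [LinearOrder Λ]
    (Hij : Λ → Λ → Matrix (Λ → Fin 2) (Λ → Fin 2) ℂ)
    (hsupp : ∀ i j : Λ, i < j → SupportedOn {i, j} (Hij i j))
    (htri : ∀ i j : Λ, i < j → TracelessAt i (Hij i j))
    (htrj : ∀ i j : Λ, i < j → TracelessAt j (Hij i j))
    (H : Matrix (Λ → Fin 2) (Λ → Fin 2) ℂ)
    (hH : H = ∑ p ∈ Finset.univ.filter (fun p : Λ × Λ => p.1 < p.2), Hij p.1 p.2)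
    (O : Matrix (Λ → Fin 2) (Λ → Fin 2) ℂ) (hO : O ≠ 0) (hOnorm : opNorm O ≤ 1) :
    fnorm (H * O) ≤
      2 * Real.exp 1 *
        Real.sqrt (∑ p ∈ Finset.univ.filter (fun p : Λ × Λ => p.1 < p.2),
          opNorm (Hij p.1 p.2) ^ 2) *
        fnorm O * (|Real.log (fnorm O)| + 1) := by
  have hlt : ∀ p ∈ univ.filter (fun p : Λ × Λ ↦ p.1 < p.2), p.1 < p.2 := by simp
  have htr : ∀ p ∈ univ.filter (fun p : Λ × Λ ↦ p.1 < p.2), ∀ x ∈ ({p.1, p.2} : Finset Λ),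
      TracelessAt x (Hij p.1 p.2) := fun p hp ↦ by
    simpa using ⟨htri p.1 p.2 (hlt p hp), htrj p.1 p.2 (hlt p hp)⟩
  have key := frobenius_submultiplicativity_general (h := fun p : Λ × Λ ↦ Hij p.1 p.2)
    (injOn_pair_setOf_lt.mono hlt) (fun _ _ ↦ card_le_two)
    (fun p hp _ hx ↦ (hsupp p.1 p.2 (hlt p hp)).mem_siteCommutant hx) htr hO hOnorm
  rw [Real.sq_sqrt (by positivity), ← hH] at key
  linarith
end

section
/- Let ℋ = ℋ_j ⊗ ℋ_i be a tensor product of two finite-dimensional complex Hilbert spaces, and let X, Y be operators on ℋ such that the partial trace of Y over the factor ℋ_i vanishes and X = X_j ⊗ I_i for some operator X_j on ℋ_j. Then for every real p ≥ 2, ‖X‖_p ≤ ‖X + Y‖_p. -/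
open scoped Kronecker Matrix

/-- The Schatten `p`-norm `‖A‖_p = (Tr((AᴴA)^{p/2}))^{1/p}`, expressed through the
eigenvalues of `AᴴA` (the squared singular values of `A`). -/
noncomputable def schattenNorm {n : Type*} [Fintype n] [DecidableEq n] (p : ℝ)
    (A : Matrix n n ℂ) : ℝ :=
  (∑ i, ((Matrix.isHermitian_conjTranspose_mul_self A).eigenvalues i) ^ (p / 2)) ^ (1 / p)

/-- The partial trace of an operator on `ℋ_j ⊗ ℋ_i` over the factor `ℋ_i`. -/
noncomputable def ptraceRight {J I : Type*} [Fintype I]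
    (Y : Matrix (J × I) (J × I) ℂ) : Matrix J J ℂ :=
  Matrix.of fun a b => ∑ i : I, Y (a, i) (b, i)

/-!
Put `q = p / 2`, `C = XᴴX` and `B = (X + Y)ᴴ(X + Y)`. Klein's inequality for the convex function
`t ↦ t ^ q`, namely `Tr C ^ q + q Tr (C ^ (q - 1) (B - C)) ≤ Tr B ^ q`, shows that it suffices to
bound the first-order term from below. There `B - C = XᴴY + YᴴX + YᴴY`: the part quadratic in `Y`
has nonnegative trace against the positive operator `C ^ (q - 1)`, and the two linear parts have
the same real part. If `X = X_j ⊗ I`, then `C ^ (q - 1) Xᴴ` is again of the form `M ⊗ I`, so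
`Tr (C ^ (q - 1) Xᴴ Y) = Tr (M Tr_i Y) = 0`.
-/

section TraceFunctionalCalculus

variable {m n k l 𝕜 : Type*} [RCLike 𝕜] [Fintype n]

theorem re_trace_mul_conjTranspose_mul_comm [Fintype m] {G : Matrix n n 𝕜} (hG : G.IsHermitian)
    (X Y : Matrix m n 𝕜) :
    RCLike.re (G * (Yᴴ * X)).trace = RCLike.re (G * (Xᴴ * Y)).trace := by
  rw [← RCLike.conj_re, ← RCLike.star_def, ← Matrix.trace_conjTranspose,
    Matrix.conjTranspose_mul, Matrix.conjTranspose_mul, Matrix.conjTranspose_conjTranspose,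
    hG.eq, Matrix.trace_mul_comm]

theorem trace_conj_diagonal_mul_conj_diagonal [Fintype k] [DecidableEq k] [Fintype l]
    [DecidableEq l] (U : Matrix n k 𝕜) (V : Matrix n l 𝕜) (a : k → 𝕜) (b : l → 𝕜) :
    (U * Matrix.diagonal a * Uᴴ * (V * Matrix.diagonal b * Vᴴ)).trace =
      ∑ i, ∑ j, a i * b j * (‖(Uᴴ * V) i j‖ ^ 2 : ℝ) := by
  set W := Uᴴ * V with hW
  have cyclic : (U * Matrix.diagonal a * Uᴴ * (V * Matrix.diagonal b * Vᴴ)).trace =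
      (Matrix.diagonal a * W * (Matrix.diagonal b * Wᴴ)).trace := by
    rw [Matrix.mul_assoc U, Matrix.mul_assoc U, Matrix.trace_mul_comm U]
    simp only [hW, Matrix.conjTranspose_mul, Matrix.conjTranspose_conjTranspose,
      Matrix.mul_assoc]
  rw [cyclic]
  simp only [Matrix.trace, Matrix.diag_apply, Matrix.mul_apply (M := Matrix.diagonal a * W),
    Matrix.diagonal_mul, Matrix.conjTranspose_apply]
  refine Finset.sum_congr rfl fun i _ => Finset.sum_congr rfl fun j _ => ?_
  rw [RCLike.ofReal_pow, ← RCLike.mul_conj, RCLike.star_def]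
  ring

variable [DecidableEq n] {A B : Matrix n n 𝕜}

theorem re_trace_cfc (hA : A.IsHermitian) (f : ℝ → ℝ) :
    RCLike.re (cfc f A).trace = ∑ i, f (hA.eigenvalues i) := by
  rw [hA.cfc_eq, Matrix.IsHermitian.cfc, Unitary.conjStarAlgAut_apply, Matrix.trace_mul_cycle,
    Unitary.coe_star_mul_self, one_mul, Matrix.trace_diagonal, map_sum]
  simp only [Function.comp_apply, RCLike.ofReal_re]

open scoped ComplexOrder MatrixOrder in
theorem re_trace_cfc_mul_conjTranspose_mul_self_nonneg [Fintype m] {g : ℝ → ℝ}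
    (hg : ∀ x ∈ spectrum ℝ A, 0 ≤ g x) (Y : Matrix m n 𝕜) :
    0 ≤ RCLike.re (cfc g A * (Yᴴ * Y)).trace := by
  rw [← Matrix.mul_assoc, Matrix.trace_mul_comm, ← Matrix.mul_assoc]
  have posSemidef :=
    (Matrix.nonneg_iff_posSemidef.mp (cfc_nonneg hg)).mul_mul_conjTranspose_same Y
  exact (RCLike.nonneg_iff.mp posSemidef.trace_nonneg).1

theorem re_trace_cfc_mul_cfc (hA : A.IsHermitian) (hB : B.IsHermitian) (f g : ℝ → ℝ) :
    RCLike.re (cfc f A * cfc g B).trace =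
      ∑ i, ∑ j, f (hA.eigenvalues i) * g (hB.eigenvalues j) *
        ‖((hA.eigenvectorUnitary : Matrix n n 𝕜)ᴴ * hB.eigenvectorUnitary) i j‖ ^ 2 := by
  rw [hA.cfc_eq, hB.cfc_eq, Matrix.IsHermitian.cfc, Matrix.IsHermitian.cfc,
    Unitary.conjStarAlgAut_apply, Unitary.conjStarAlgAut_apply, Matrix.star_eq_conjTranspose,
    Matrix.star_eq_conjTranspose, trace_conj_diagonal_mul_conj_diagonal]
  simp only [Function.comp_apply, ← RCLike.ofReal_mul, ← RCLike.ofReal_sum, RCLike.ofReal_re]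

theorem klein_inequality (hA : A.IsHermitian) (hB : B.IsHermitian) {f g : ℝ → ℝ}
    (hfg : ∀ a ∈ spectrum ℝ A, ∀ b ∈ spectrum ℝ B, f b + g b * (a - b) ≤ f a) :
    RCLike.re (cfc f B).trace + RCLike.re (cfc g B * (A - B)).trace ≤
      RCLike.re (cfc f A).trace := by
  -- All four traces are double sums against the same nonnegative weights, the squared overlaps
  -- of the two eigenbases, so the scalar inequality can be applied termwise.
  set w : n → n → ℝ := fun i j =>
    ‖((hA.eigenvectorUnitary : Matrix n n 𝕜)ᴴ * hB.eigenvectorUnitary) i j‖ ^ 2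
  set a := hA.eigenvalues
  set b := hB.eigenvalues
  have expand (φ ψ : ℝ → ℝ) : RCLike.re (cfc φ A * cfc ψ B).trace =
      ∑ i, ∑ j, φ (a i) * ψ (b j) * w i j := re_trace_cfc_mul_cfc hA hB φ ψ
  have expand_f_A : RCLike.re (cfc f A).trace = ∑ i, ∑ j, f (a i) * w i j := by
    simpa only [cfc_const_one ℝ B, mul_one] using expand f fun _ => 1
  have expand_f_B : RCLike.re (cfc f B).trace = ∑ i, ∑ j, f (b j) * w i j := by
    simpa only [cfc_const_one ℝ A, one_mul] using expand (fun _ => 1) f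
  have expand_g_A : RCLike.re (cfc g B * A).trace = ∑ i, ∑ j, a i * g (b j) * w i j := by
    rw [← expand (fun x => x) g, cfc_id' ℝ A, Matrix.trace_mul_comm]
  have expand_g_B : RCLike.re (cfc g B * B).trace = ∑ i, ∑ j, g (b j) * b j * w i j := by
    have hg : ContinuousOn g (spectrum ℝ B) := Matrix.finite_real_spectrum.continuousOn g
    simpa only [cfc_const_one ℝ A, one_mul, cfc_mul g (fun x => x) B, cfc_id' ℝ B]
      using expand (fun _ => 1) fun x => g x * x
  rw [mul_sub, Matrix.trace_sub, map_sub, expand_f_A, expand_f_B, expand_g_A, expand_g_B]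
  simp only [← Finset.sum_sub_distrib, ← Finset.sum_add_distrib]
  refine Finset.sum_le_sum fun i _ => Finset.sum_le_sum fun j _ => ?_
  have weighted := mul_le_mul_of_nonneg_right
    (hfg _ (hA.eigenvalues_mem_spectrum_real i) _ (hB.eigenvalues_mem_spectrum_real j))
    (show 0 ≤ w i j from sq_nonneg _)
  linarith

theorem add_mul_sub_le_of_convexOn_of_hasDerivAt {S : Set ℝ} {f : ℝ → ℝ} {f' x y : ℝ}
    (hf : ConvexOn ℝ S f) (hx : x ∈ S) (hy : y ∈ S) (hf' : HasDerivAt f f' x) :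
    f x + f' * (y - x) ≤ f y := by
  rcases lt_trichotomy x y with hxy | rfl | hyx
  · have h := hf.le_slope_of_hasDerivAt hx hy hxy hf'
    rw [slope_def_field, le_div_iff₀ (sub_pos.mpr hxy)] at h
    linarith
  · simp
  · have h := hf.slope_le_of_hasDerivAt hy hx hyx hf'
    rw [slope_def_field, div_le_iff₀ (sub_pos.mpr hyx)] at h
    linarith

open scoped ComplexOrder MatrixOrder in
theorem klein_inequality_rpow (hA : A.PosSemidef) (hB : B.PosSemidef) {q : ℝ} (hq : 1 ≤ q) :
    RCLike.re (cfc (· ^ q : ℝ → ℝ) B).trace +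
        q * RCLike.re (cfc (· ^ (q - 1) : ℝ → ℝ) B * (A - B)).trace ≤
      RCLike.re (cfc (· ^ q : ℝ → ℝ) A).trace := by
  have tangent : ∀ a ∈ spectrum ℝ A, ∀ b ∈ spectrum ℝ B,
      b ^ q + q * b ^ (q - 1) * (a - b) ≤ a ^ q := fun a ha b hb =>
    add_mul_sub_le_of_convexOn_of_hasDerivAt (convexOn_rpow hq)
      (spectrum_nonneg_of_nonneg hB.nonneg hb) (spectrum_nonneg_of_nonneg hA.nonneg ha)
      (Real.hasDerivAt_rpow_const (Or.inr hq))
  have klein := klein_inequality hA.isHermitian hB.isHermitian tangent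
  rwa [cfc_const_mul q (· ^ (q - 1)) B, Matrix.smul_mul, Matrix.trace_smul, RCLike.smul_re]
    at klein

end TraceFunctionalCalculus

section SchattenNorm

variable {n : Type*} [Fintype n] [DecidableEq n]

theorem schattenNorm_eq_re_trace_cfc (p : ℝ) (A : Matrix n n ℂ) :
    schattenNorm p A = (cfc (· ^ (p / 2) : ℝ → ℝ) (Aᴴ * A)).trace.re ^ (1 / p) := by
  rw [schattenNorm, ← RCLike.re_eq_complex_re,
    re_trace_cfc (Matrix.isHermitian_conjTranspose_mul_self A)]

open scoped ComplexOrder MatrixOrder in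
theorem schattenNorm_le_schattenNorm_add_of_re_trace_nonneg {p : ℝ} (hp : 2 ≤ p)
    {X Y : Matrix n n ℂ}
    (hXY : 0 ≤ (cfc (· ^ (p / 2 - 1) : ℝ → ℝ) (Xᴴ * X) * (Xᴴ * Y)).trace.re) :
    schattenNorm p X ≤ schattenNorm p (X + Y) := by
  have hX := Matrix.posSemidef_conjTranspose_mul_self X
  set G := cfc (· ^ (p / 2 - 1) : ℝ → ℝ) (Xᴴ * X)
  have cross : 0 ≤ (G * (Yᴴ * X)).trace.re :=
    hXY.trans_eq (re_trace_mul_conjTranspose_mul_comm (cfc_predicate _ _) Y X)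
  have square : 0 ≤ (G * (Yᴴ * Y)).trace.re :=
    re_trace_cfc_mul_conjTranspose_mul_self_nonneg
      (fun x hx => Real.rpow_nonneg (spectrum_nonneg_of_nonneg hX.nonneg hx) _) Y
  have first_order : 0 ≤ (G * ((X + Y)ᴴ * (X + Y) - Xᴴ * X)).trace.re := by
    have expand : (X + Y)ᴴ * (X + Y) - Xᴴ * X = Xᴴ * Y + Yᴴ * X + Yᴴ * Y := by
      rw [Matrix.conjTranspose_add]
      noncomm_ring
    rw [expand]
    simp only [Matrix.mul_add, Matrix.trace_add, Complex.add_re]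
    positivity
  have klein := klein_inequality_rpow (Matrix.posSemidef_conjTranspose_mul_self (X + Y)) hX
    (show 1 ≤ p / 2 by linarith)
  rw [schattenNorm_eq_re_trace_cfc, schattenNorm_eq_re_trace_cfc]
  refine Real.rpow_le_rpow ?_ ?_ (by positivity)
  · rw [← RCLike.re_eq_complex_re, re_trace_cfc hX.isHermitian]
    exact Finset.sum_nonneg fun i _ => Real.rpow_nonneg (hX.eigenvalues_nonneg i) _
  · exact le_of_add_le_of_nonneg_left klein (mul_nonneg (by positivity) first_order)

end SchattenNorm

section PartialTrace

variable {J I : Type*} [Fintype J] [Fintype I] [DecidableEq I]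

theorem trace_kronecker_one_mul (A : Matrix J J ℂ) (Y : Matrix (J × I) (J × I) ℂ) :
    (A ⊗ₖ (1 : Matrix I I ℂ) * Y).trace = (A * ptraceRight Y).trace := by
  simp only [Matrix.trace, Matrix.diag_apply, Matrix.mul_apply, ptraceRight, Matrix.of_apply,
    Fintype.sum_prod_type, Matrix.kroneckerMap_apply, Matrix.one_apply, mul_ite, mul_one, mul_zero,
    ite_mul, zero_mul, Finset.sum_ite_eq, Finset.mem_univ, if_true, Finset.mul_sum]
  exact Finset.sum_congr rfl fun a _ => Finset.sum_comm

variable [DecidableEq J]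

section Ampliation

variable {R : Type*} [CommSemiring R] [StarRing R]

variable (I) in
/-- The ampliation `A ↦ A ⊗ I`, bundled as a star homomorphism because such homomorphisms commute
with the continuous functional calculus. -/
@[simps]
def ampliation : Matrix J J R →⋆ₐ[R] Matrix (J × I) (J × I) R where
  toFun A := A ⊗ₖ (1 : Matrix I I R)
  map_one' := Matrix.one_kronecker_one
  map_mul' A B := by rw [← Matrix.mul_kronecker_mul, Matrix.one_mul]
  map_zero' := Matrix.zero_kronecker _
  map_add' A B := Matrix.add_kronecker A B _
  commutes' r := by
    rw [Algebra.algebraMap_eq_smul_one, Algebra.algebraMap_eq_smul_one, Matrix.smul_kronecker,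
      Matrix.one_kronecker_one]
  map_star' A := by
    rw [Matrix.star_eq_conjTranspose, Matrix.star_eq_conjTranspose,
      Matrix.conjTranspose_kronecker, Matrix.conjTranspose_one]

theorem conjTranspose_ampliation (A : Matrix J J R) :
    (ampliation I A)ᴴ = ampliation I Aᴴ :=
  (map_star (ampliation I) A).symm

end Ampliation

variable {𝕜 : Type*} [RCLike 𝕜]

theorem continuous_ampliation :
    Continuous (ampliation I : Matrix J J 𝕜 →⋆ₐ[𝕜] Matrix (J × I) (J × I) 𝕜) :=
  continuous_matrix fun k l => (continuous_id.matrix_elem k.1 l.1).mul continuous_const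

theorem cfc_ampliation {A : Matrix J J 𝕜} (hA : A.IsHermitian) (f : ℝ → ℝ) :
    cfc f (ampliation I A) = ampliation I (cfc f A) :=
  ((ampliation I).map_cfc f A (Matrix.finite_real_spectrum.continuousOn f) continuous_ampliation
    hA (IsSelfAdjoint.map hA (ampliation I))).symm

end PartialTrace

/-- If `Tr_i(Y) = 0` and `X = X_j ⊗ I_i`, then for `p ≥ 2`, `‖X‖_p ≤ ‖X + Y‖_p`. -/
theorem schatten_le_of_traceless_perturbation
    {J I : Type*} [Fintype J] [Fintype I] [DecidableEq J] [DecidableEq I]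
    (X Y : Matrix (J × I) (J × I) ℂ)
    (Xj : Matrix J J ℂ) (hX : X = Xj ⊗ₖ (1 : Matrix I I ℂ))
    (hY : ptraceRight Y = 0)
    (p : ℝ) (hp : 2 ≤ p) :
    schattenNorm p X ≤ schattenNorm p (X + Y) := by
  obtain rfl : X = ampliation I Xj := hX
  have orthogonal (M : Matrix J J ℂ) : (ampliation I M * Y).trace = 0 := by
    rw [ampliation_apply, trace_kronecker_one_mul, hY, Matrix.mul_zero, Matrix.trace_zero]
  refine schattenNorm_le_schattenNorm_add_of_re_trace_nonneg hp (le_of_eq ?_)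
  rw [conjTranspose_ampliation, ← map_mul,
    cfc_ampliation (Matrix.isHermitian_conjTranspose_mul_self Xj), ← Matrix.mul_assoc,
    ← map_mul, orthogonal, Complex.zero_re]
end

section
/- Let G ⊂ U(2) be the 48-element group G = {±1, (±1 ± iσ_a)/√2, ±iσ_a, (±iσ_a ± iσ_b)/√2 with a ≠ b, (±1 ± iσ₁ ± iσ₂ ± iσ₃)/2}, where σ₁,σ₂,σ₃ are the Pauli matrices and a,b range over {1,2,3}. Then: (i) for each a ∈ {1,2,3}, ∑_{D∈G} D† σ_a D = 0; and (ii) for all a,b ∈ {1,2,3}, (1/48)·∑_{D∈G} (D† σ_a D) ⊗ (D† σ_b D) = δ_{ab} · (1/3)·∑_{c=1}^3 σ_c ⊗ σ_c, where ⊗ denotes the Kronecker product of 2×2 complex matrices. -/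
open scoped Kronecker Matrix

noncomputable section

/-- The three Pauli matrices `σ₁ = X`, `σ₂ = Y`, `σ₃ = Z`. -/
def pauli : Fin 3 → Matrix (Fin 2) (Fin 2) ℂ := fun a =>
  if a = 0 then !![0, 1; 1, 0]
  else if a = 1 then !![0, -Complex.I; Complex.I, 0]
  else !![1, 0; 0, -1]

/-- The two signs `±1`. -/
def signs : List ℂ := [1, -1]

/-- The 48-element group
`G = {±1, (±1 ± iσ_a)/√2, ±iσ_a, (±iσ_a ± iσ_b)/√2 (a ≠ b), (±1 ± iσ₁ ± iσ₂ ± iσ₃)/2}`,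
enumerated as a list of forty-eight 2×2 unitary matrices. -/
def Glist : List (Matrix (Fin 2) (Fin 2) ℂ) :=
  (signs.map fun ε => ε • (1 : Matrix (Fin 2) (Fin 2) ℂ)) ++
  ((List.finRange 3).flatMap fun a => signs.flatMap fun ε₀ => signs.map fun ε₁ =>
    ((Real.sqrt 2 : ℂ))⁻¹ • (ε₀ • (1 : Matrix (Fin 2) (Fin 2) ℂ)
      + (ε₁ * Complex.I) • pauli a)) ++
  ((List.finRange 3).flatMap fun a => signs.map fun ε =>
    (ε * Complex.I) • pauli a) ++
  (([((0 : Fin 3), (1 : Fin 3)), (0, 2), (1, 2)]).flatMap fun ab =>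
    signs.flatMap fun ε₀ => signs.map fun ε₁ =>
      ((Real.sqrt 2 : ℂ))⁻¹ • ((ε₀ * Complex.I) • pauli ab.1 + (ε₁ * Complex.I) • pauli ab.2)) ++
  (signs.flatMap fun ε₀ => signs.flatMap fun ε₁ => signs.flatMap fun ε₂ =>
    signs.map fun ε₃ =>
      ((2 : ℂ))⁻¹ • (ε₀ • (1 : Matrix (Fin 2) (Fin 2) ℂ) + (ε₁ * Complex.I) • pauli 0
        + (ε₂ * Complex.I) • pauli 1 + (ε₃ * Complex.I) • pauli 2))

/-! Conjugation by `(1 + iσ_c)/√2` is a quarter turn about the `c`-th axis. Left multiplication by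
a quarter turn permutes `G`, so averages over `G` may be computed after first conjugating by
quarter turns. A half turn about another axis negates `σ_a`, and the half turn about the `a`-th axis
negates `σ_a ⊗ σ_b` for `a ≠ b`, so those averages vanish. A quarter turn carries `σ_{c+1}` to
`σ_{c+2}`, so the averages of the `σ_a ⊗ σ_a` all agree, hence equal a third of the average of
`∑ σ_c ⊗ σ_c = 2 SWAP - 1`, which commutes with every `D ⊗ D`. -/

section LeftInvariant

/-- A list, regarded as a multiset, is left invariant under `g` if left multiplication by `g`
permutes its entries. Asking this for generators `g` only spares a multiplication table of `G`. -/
def IsLeftInvariant {M : Type*} [Mul M] (l : List M) (g : M) : Prop :=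
  (l.map (g * ·)).Perm l

namespace IsLeftInvariant

lemma mul {M : Type*} [Semigroup M] {l : List M} {g h : M}
    (hg : IsLeftInvariant l g) (hh : IsLeftInvariant l h) : IsLeftInvariant l (g * h) := by
  have : l.map (g * h * ·) = (l.map (h * ·)).map (g * ·) := by
    simp [mul_assoc]
  rw [IsLeftInvariant, this]
  exact (hh.map _).trans hg

lemma sum_map {M N : Type*} [Mul M] [AddCommMonoid N] {l : List M} {g : M}
    (hg : IsLeftInvariant l g) (f : M → N) :
    (l.map fun D => f (g * D)).sum = (l.map f).sum := by
  simpa [Function.comp_def] using (hg.map f).sum_eq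

lemma kronecker_self {n R : Type*} [Fintype n] [CommSemiring R] {l : List (Matrix n n R)}
    {g : Matrix n n R} (hg : IsLeftInvariant l g) :
    IsLeftInvariant (l.map fun D => D ⊗ₖ D) (g ⊗ₖ g) := by
  simpa [IsLeftInvariant, Function.comp_def, Matrix.mul_kronecker_mul] using
    hg.map fun D => D ⊗ₖ D

end IsLeftInvariant

end LeftInvariant

section Twirl

variable {R : Type*} [Ring R] [StarRing R] {l : List R} {A g : R}

/-- The (unnormalized) twirl `A ↦ ∑ D† A D` over the entries `D` of a list. -/
def twirl (l : List R) : R →+ R :=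
  AddMonoidHom.mk' (fun A => (l.map fun D => star D * A * D).sum) fun A B => by
    simp only [mul_add, add_mul, List.sum_map_add]

lemma twirl_apply (l : List R) (A : R) : twirl l A = (l.map fun D => star D * A * D).sum :=
  rfl

lemma IsLeftInvariant.twirl_conj (hg : IsLeftInvariant l g) (A : R) :
    twirl l (star g * A * g) = twirl l A := by
  simpa only [twirl_apply, star_mul, mul_assoc] using hg.sum_map fun D => star D * A * D

lemma IsLeftInvariant.twirl_eq_zero [IsAddTorsionFree R] (hg : IsLeftInvariant l g)
    (hA : star g * A * g = -A) : twirl l A = 0 := by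
  rw [← self_eq_neg, ← map_neg, ← hA, hg.twirl_conj]

lemma twirl_of_commute (hl : ∀ D ∈ l, star D * D = 1) (hA : ∀ D ∈ l, Commute A D) :
    twirl l A = l.length • A := by
  have h_fixed : ∀ D ∈ l, star D * A * D = A := fun D hD => by
    rw [mul_assoc, (hA D hD).eq, ← mul_assoc, hl D hD, one_mul]
  rw [twirl_apply, List.map_congr_left h_fixed, List.map_const', List.sum_replicate]

lemma twirl_kronecker {n S : Type*} [Fintype n] [DecidableEq n] [CommRing S] [StarRing S]
    (l : List (Matrix n n S)) (A B : Matrix n n S) :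
    twirl (l.map fun D => D ⊗ₖ D) (A ⊗ₖ B) =
      (l.map fun D => (Dᴴ * A * D) ⊗ₖ (Dᴴ * B * D)).sum := by
  simp only [twirl_apply, List.map_map, Function.comp_def, Matrix.star_eq_conjTranspose,
    Matrix.conjTranspose_kronecker, Matrix.mul_kronecker_mul]

end Twirl

lemma commute_swap_kronecker_self {n R : Type*} [Fintype n] [DecidableEq n] [CommSemiring R]
    (A : Matrix n n R) :
    Commute (Equiv.Perm.permMatrix R (Equiv.prodComm n n)) (A ⊗ₖ A) := by
  rw [Commute, SemiconjBy, PEquiv.toMatrix_toPEquiv_mul, PEquiv.mul_toMatrix_toPEquiv]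
  ext ⟨i, j⟩ ⟨k, l⟩
  simp [mul_comm]

section Pauli

lemma conjTranspose_pauli (a : Fin 3) : (pauli a)ᴴ = pauli a := by
  ext i j
  fin_cases a <;> fin_cases i <;> fin_cases j <;> simp [pauli]

lemma pauli_mul_self (a : Fin 3) : pauli a * pauli a = 1 := by
  fin_cases a <;> simp [pauli, Matrix.one_fin_two]

lemma pauli_mul_pauli_of_ne {a b : Fin 3} (hab : a ≠ b) :
    pauli a * pauli b = -(pauli b * pauli a) := by
  revert hab
  fin_cases a <;> fin_cases b <;> simp [pauli]

lemma I_smul_pauli_add_one_mul_pauli (c : Fin 3) :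
    Complex.I • (pauli (c + 1) * pauli c) = pauli (c + 2) := by
  fin_cases c <;> simp [pauli]

lemma pauli_conj_pauli_self (a : Fin 3) :
    (Complex.I • pauli a)ᴴ * pauli a * (Complex.I • pauli a) = pauli a := by
  simp [conjTranspose_pauli, pauli_mul_self, smul_smul]

lemma pauli_conj_pauli_of_ne {a b : Fin 3} (hab : a ≠ b) :
    (Complex.I • pauli b)ᴴ * pauli a * (Complex.I • pauli b) = -pauli a := by
  simp [conjTranspose_pauli, smul_smul, mul_assoc, pauli_mul_pauli_of_ne hab,
    ← mul_assoc (pauli b), pauli_mul_self]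

lemma sum_pauli_kronecker_self :
    ∑ c, pauli c ⊗ₖ pauli c =
      (2 : ℂ) • Equiv.Perm.permMatrix ℂ (Equiv.prodComm (Fin 2) (Fin 2)) - 1 := by
  ext ⟨i, j⟩ ⟨k, l⟩
  fin_cases i <;> fin_cases j <;> fin_cases k <;> fin_cases l <;>
    simp [pauli, Fin.sum_univ_three, PEquiv.toMatrix_apply] <;> norm_num

lemma commute_sum_pauli_kronecker_self (A : Matrix (Fin 2) (Fin 2) ℂ) :
    Commute (∑ c, pauli c ⊗ₖ pauli c) (A ⊗ₖ A) := by
  rw [sum_pauli_kronecker_self]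
  exact ((commute_swap_kronecker_self A).smul_left 2).sub_left (Commute.one_left _)

end Pauli

section QuarterTurn

lemma inv_sqrt_two_mul_self : ((√2 : ℂ))⁻¹ * (√2 : ℂ)⁻¹ = 2⁻¹ := by
  rw [← mul_inv, ← Complex.ofReal_mul, Real.mul_self_sqrt zero_le_two, Complex.ofReal_ofNat]

/-- The unitary `(1 + iσ_c)/√2`, whose conjugation action rotates the Bloch sphere by a right angle
about the `c`-th axis. The three quarter turns generate `G`. -/
def quarterTurn (c : Fin 3) : Matrix (Fin 2) (Fin 2) ℂ :=
  (√2 : ℂ)⁻¹ • (1 + Complex.I • pauli c)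

lemma quarterTurn_mul_self (c : Fin 3) :
    quarterTurn c * quarterTurn c = Complex.I • pauli c := by
  simp only [quarterTurn, smul_mul_smul_comm, inv_sqrt_two_mul_self, mul_add, add_mul, one_mul,
    mul_one, pauli_mul_self, Complex.I_mul_I]
  module

lemma quarterTurn_conj_pauli_add_one (c : Fin 3) :
    (quarterTurn c)ᴴ * pauli (c + 1) * quarterTurn c = pauli (c + 2) := by
  have h_swap : (quarterTurn c)ᴴ * pauli (c + 1) = pauli (c + 1) * quarterTurn c := by
    simp [quarterTurn, conjTranspose_pauli, add_mul, mul_add,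
      pauli_mul_pauli_of_ne (show c ≠ c + 1 by simp)]
  calc
    (quarterTurn c)ᴴ * pauli (c + 1) * quarterTurn c
      = pauli (c + 1) * (quarterTurn c * quarterTurn c) := by rw [h_swap, mul_assoc]
    _ = Complex.I • (pauli (c + 1) * pauli c) := by rw [quarterTurn_mul_self, mul_smul_comm]
    _ = pauli (c + 2) := I_smul_pauli_add_one_mul_pauli c

end QuarterTurn

section TwirlPauli

variable {l : List (Matrix (Fin 2) (Fin 2) ℂ)}

lemma isLeftInvariant_I_smul_pauli (hl : ∀ c, IsLeftInvariant l (quarterTurn c)) (c : Fin 3) :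
    IsLeftInvariant l (Complex.I • pauli c) :=
  quarterTurn_mul_self c ▸ (hl c).mul (hl c)

lemma twirl_pauli_eq_zero (hl : ∀ c, IsLeftInvariant l (quarterTurn c)) (a : Fin 3) :
    twirl l (pauli a) = 0 := by
  have : IsAddTorsionFree (Matrix (Fin 2) (Fin 2) ℂ) := .of_module_rat _
  obtain ⟨b, hab⟩ : ∃ b, a ≠ b := ⟨a + 1, by simp⟩
  exact (isLeftInvariant_I_smul_pauli hl b).twirl_eq_zero (pauli_conj_pauli_of_ne hab)

lemma twirl_pauli_kronecker_of_ne (hl : ∀ c, IsLeftInvariant l (quarterTurn c)) {a b : Fin 3}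
    (hab : a ≠ b) : twirl (l.map fun D => D ⊗ₖ D) (pauli a ⊗ₖ pauli b) = 0 := by
  have : IsAddTorsionFree (Matrix (Fin 2 × Fin 2) (Fin 2 × Fin 2) ℂ) := .of_module_rat _
  refine (isLeftInvariant_I_smul_pauli hl a).kronecker_self.twirl_eq_zero ?_
  rw [Matrix.star_eq_conjTranspose, Matrix.conjTranspose_kronecker, ← Matrix.mul_kronecker_mul,
    ← Matrix.mul_kronecker_mul, pauli_conj_pauli_self, pauli_conj_pauli_of_ne hab.symm]
  ext
  simp

lemma twirl_pauli_kronecker_self_add_one (hl : ∀ c, IsLeftInvariant l (quarterTurn c))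
    (a : Fin 3) :
    twirl (l.map fun D => D ⊗ₖ D) (pauli (a + 1) ⊗ₖ pauli (a + 1)) =
      twirl (l.map fun D => D ⊗ₖ D) (pauli a ⊗ₖ pauli a) := by
  have h_conj : (quarterTurn (a + 2))ᴴ * pauli a * quarterTurn (a + 2) = pauli (a + 1) := by
    simpa [add_assoc] using quarterTurn_conj_pauli_add_one (a + 2)
  rw [← (hl (a + 2)).kronecker_self.twirl_conj (pauli a ⊗ₖ pauli a),
    Matrix.star_eq_conjTranspose, Matrix.conjTranspose_kronecker, ← Matrix.mul_kronecker_mul,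
    ← Matrix.mul_kronecker_mul, h_conj]

lemma twirl_pauli_kronecker_self (hl : ∀ c, IsLeftInvariant l (quarterTurn c))
    (hu : ∀ D ∈ l, Dᴴ * D = 1) (a : Fin 3) :
    twirl (l.map fun D => D ⊗ₖ D) (pauli a ⊗ₖ pauli a) =
      (l.length / 3 : ℂ) • ∑ c, pauli c ⊗ₖ pauli c := by
  have h_unitary : ∀ E ∈ l.map fun D => D ⊗ₖ D, star E * E = 1 := by
    simp only [List.forall_mem_map, Matrix.star_eq_conjTranspose, Matrix.conjTranspose_kronecker,
      ← Matrix.mul_kronecker_mul]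
    intro D hD
    rw [hu D hD, Matrix.one_kronecker_one]
  have h_total : ∑ b, twirl (l.map fun D => D ⊗ₖ D) (pauli b ⊗ₖ pauli b) =
      l.length • ∑ c, pauli c ⊗ₖ pauli c := by
    rw [← map_sum, twirl_of_commute h_unitary, List.length_map]
    simp only [List.forall_mem_map]
    exact fun D _ => commute_sum_pauli_kronecker_self D
  have h_eq_zero (b : Fin 3) : twirl (l.map fun D => D ⊗ₖ D) (pauli b ⊗ₖ pauli b) =
      twirl (l.map fun D => D ⊗ₖ D) (pauli 0 ⊗ₖ pauli 0) := by
    induction b using Fin.induction with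
    | zero => rfl
    | succ b ih => rw [← Fin.coeSucc_eq_succ, twirl_pauli_kronecker_self_add_one hl, ih]
  simp only [h_eq_zero, Finset.sum_const, Finset.card_univ, Fintype.card_fin] at h_total
  rw [h_eq_zero a, div_eq_inv_mul, mul_smul, Nat.cast_smul_eq_nsmul, ← h_total]
  module

end TwirlPauli

section QuaternionModel

open scoped Quaternion

/-- The standard embedding of quaternions into complex `2 × 2` matrices, for quaternions with
coordinates in a ring `R` of real numbers given by `ρ : R →+* ℝ`. In terms of Pauli matrices it
sends `i, j, k` to `iσ₃, iσ₂, iσ₁`, in this order. -/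
def quaternionMatrix {R : Type*} [CommRing R] (ρ : R →+* ℝ) :
    ℍ[R] →+* Matrix (Fin 2) (Fin 2) ℂ where
  toFun q := !![ρ q.re + ρ q.imI * Complex.I, ρ q.imJ + ρ q.imK * Complex.I;
    -ρ q.imJ + ρ q.imK * Complex.I, ρ q.re - ρ q.imI * Complex.I]
  map_one' := by simp [Matrix.one_fin_two]
  map_zero' := by simp [← Matrix.ext_iff, Fin.forall_fin_two]
  map_add' p q := by
    ext i j
    fin_cases i <;> fin_cases j <;> simp <;> ring
  map_mul' p q := by
    ext i j
    fin_cases i <;> fin_cases j <;> simp <;> grind [Complex.I_mul_I]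

lemma conjTranspose_quaternionMatrix {R : Type*} [CommRing R] (ρ : R →+* ℝ) (q : ℍ[R]) :
    (quaternionMatrix ρ q)ᴴ = quaternionMatrix ρ (star q) := by
  ext i j
  fin_cases i <;> fin_cases j <;> simp [quaternionMatrix, sub_eq_add_neg]

lemma quaternionMatrix_smul {R : Type*} [CommRing R] (ρ : R →+* ℝ) (r : R) (q : ℍ[R]) :
    quaternionMatrix ρ (r • q) = (ρ r : ℂ) • quaternionMatrix ρ q := by
  ext i j
  fin_cases i <;> fin_cases j <;> simp [quaternionMatrix] <;> ring

instance : DecidableEq ℍ[ℤ√2] :=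
  (QuaternionAlgebra.equivProd (-1) 0 (-1)).decidableEq

/-- The imaginary unit of `ℍ[ℤ√2]` that `quaternionMatrix` sends to `iσ_a`. -/
def pauliUnit : Fin 3 → ℍ[ℤ√2] :=
  ![⟨0, 0, 0, 1⟩, ⟨0, 0, 1, 0⟩, ⟨0, 1, 0, 0⟩]

/-- The matrix represented by half of a quaternion over `ℤ[√2]`. The factor `1/2` makes every
element of `G` such a matrix, which reduces products in `G` to arithmetic that can be decided. -/
def halfQuaternionMatrix (q : ℍ[ℤ√2]) : Matrix (Fin 2) (Fin 2) ℂ :=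
  (2⁻¹ : ℂ) • quaternionMatrix (Zsqrtd.toReal zero_le_two) q

lemma quaternionMatrix_pauliUnit (a : Fin 3) :
    quaternionMatrix (Zsqrtd.toReal zero_le_two) (pauliUnit a) = Complex.I • pauli a := by
  ext i j
  fin_cases a <;> fin_cases i <;> fin_cases j <;> simp [quaternionMatrix, pauliUnit, pauli]

lemma halfQuaternionMatrix_mul (p q : ℍ[ℤ√2]) :
    halfQuaternionMatrix p * halfQuaternionMatrix q =
      (2⁻¹ : ℂ) • halfQuaternionMatrix (p * q) := by
  simp only [halfQuaternionMatrix, map_mul, smul_mul_assoc, mul_smul_comm]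

lemma halfQuaternionMatrix_two_mul (q : ℍ[ℤ√2]) :
    halfQuaternionMatrix (2 * q) = quaternionMatrix (Zsqrtd.toReal zero_le_two) q := by
  rw [halfQuaternionMatrix, two_mul, map_add, ← two_smul ℂ, inv_smul_smul₀ two_ne_zero]

lemma conjTranspose_halfQuaternionMatrix (q : ℍ[ℤ√2]) :
    (halfQuaternionMatrix q)ᴴ = halfQuaternionMatrix (star q) := by
  simp [halfQuaternionMatrix, conjTranspose_quaternionMatrix]

lemma halfQuaternionMatrix_sqrtd_smul (q : ℍ[ℤ√2]) :
    halfQuaternionMatrix ((Zsqrtd.sqrtd : ℤ√2) • q) =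
      (√2 : ℂ)⁻¹ • quaternionMatrix (Zsqrtd.toReal zero_le_two) q := by
  have h_sqrt : (2⁻¹ : ℂ) * √2 = (√2 : ℂ)⁻¹ := by
    rw [← inv_sqrt_two_mul_self]
    simp
  have h_toReal : Zsqrtd.toReal zero_le_two (Zsqrtd.sqrtd : ℤ√2) = √2 := by
    simp [Zsqrtd.toReal]
  rw [halfQuaternionMatrix, quaternionMatrix_smul, smul_smul, h_toReal, h_sqrt]

lemma quarterTurn_eq_halfQuaternionMatrix (c : Fin 3) :
    quarterTurn c = halfQuaternionMatrix ((Zsqrtd.sqrtd : ℤ√2) • (1 + pauliUnit c)) := by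
  rw [halfQuaternionMatrix_sqrtd_smul, map_add, map_one, quaternionMatrix_pauliUnit, quarterTurn]

/-- The two signs `±1` as integers, the decidable counterpart of `signs`. -/
def intSigns : List ℤ := [1, -1]

lemma signs_eq_map_intSigns : signs = intSigns.map (↑) := by
  simp [signs, intSigns]

/-- The quaternions over `ℤ[√2]` representing the doubles `2D` of the entries `D` of `Glist`, in the
same order. -/
def doubledGlist : List ℍ[ℤ√2] :=
  (intSigns.map fun ε => 2 * (ε • 1)) ++
  ((List.finRange 3).flatMap fun a => intSigns.flatMap fun ε₀ => intSigns.map fun ε₁ =>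
    (Zsqrtd.sqrtd : ℤ√2) • (ε₀ • 1 + ε₁ • pauliUnit a)) ++
  ((List.finRange 3).flatMap fun a => intSigns.map fun ε => 2 * (ε • pauliUnit a)) ++
  (([((0 : Fin 3), (1 : Fin 3)), (0, 2), (1, 2)]).flatMap fun ab =>
    intSigns.flatMap fun ε₀ => intSigns.map fun ε₁ =>
      (Zsqrtd.sqrtd : ℤ√2) • (ε₀ • pauliUnit ab.1 + ε₁ • pauliUnit ab.2)) ++
  (intSigns.flatMap fun ε₀ => intSigns.flatMap fun ε₁ => intSigns.flatMap fun ε₂ =>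
    intSigns.map fun ε₃ => ε₀ • 1 + ε₁ • pauliUnit 0 + ε₂ • pauliUnit 1 + ε₃ • pauliUnit 2)

lemma Glist_eq_map_doubledGlist : Glist = doubledGlist.map halfQuaternionMatrix := by
  simp only [doubledGlist, List.map_append, List.map_flatMap, List.map_map, Function.comp_def,
    halfQuaternionMatrix_sqrtd_smul, halfQuaternionMatrix_two_mul]
  simp only [Glist, signs_eq_map_intSigns, List.flatMap_map, List.map_map, Function.comp_def,
    halfQuaternionMatrix, map_add, map_zsmul, map_one, quaternionMatrix_pauliUnit, mul_smul,
    Int.cast_smul_eq_zsmul]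

lemma doubledGlist_map_mul_perm (c : Fin 3) :
    (doubledGlist.map ((Zsqrtd.sqrtd : ℤ√2) • (1 + pauliUnit c) * ·)).Perm
      (doubledGlist.map (2 * ·)) := by
  decide +kernel +revert

lemma star_mul_self_of_mem_doubledGlist : ∀ q ∈ doubledGlist, star q * q = 2 * 2 := by
  decide +kernel

lemma length_Glist : Glist.length = 48 := by
  rw [Glist_eq_map_doubledGlist, List.length_map]
  rfl

lemma isLeftInvariant_Glist_quarterTurn (c : Fin 3) : IsLeftInvariant Glist (quarterTurn c) := by
  have h_turn : Glist.map (quarterTurn c * ·) =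
      (doubledGlist.map ((Zsqrtd.sqrtd : ℤ√2) • (1 + pauliUnit c) * ·)).map
        fun q => (2⁻¹ : ℂ) • halfQuaternionMatrix q := by
    simp only [Glist_eq_map_doubledGlist, quarterTurn_eq_halfQuaternionMatrix, List.map_map,
      Function.comp_def, halfQuaternionMatrix_mul]
  have h_id : Glist =
      (doubledGlist.map (2 * ·)).map fun q => (2⁻¹ : ℂ) • halfQuaternionMatrix q := by
    simp only [List.map_map, Function.comp_def, halfQuaternionMatrix_two_mul]
    exact Glist_eq_map_doubledGlist
  rw [IsLeftInvariant, h_turn, h_id]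
  exact (doubledGlist_map_mul_perm c).map _

lemma conjTranspose_mul_self_of_mem_Glist : ∀ D ∈ Glist, Dᴴ * D = 1 := by
  rw [Glist_eq_map_doubledGlist, List.forall_mem_map]
  intro q hq
  rw [conjTranspose_halfQuaternionMatrix, halfQuaternionMatrix_mul,
    star_mul_self_of_mem_doubledGlist q hq, halfQuaternionMatrix_two_mul, map_ofNat]
  simp [← Matrix.ext_iff, Matrix.one_apply, Matrix.ofNat_apply]

end QuaternionModel

/-- **Proposition (depolarization by the 48-element single-qubit group `G`).**
(i) `∑_{D∈G} D†σ_aD = 0` for each Pauli `σ_a`; and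
(ii) `(1/48)·∑_{D∈G} (D†σ_aD) ⊗ (D†σ_bD) = δ_{ab}·(1/3)·∑_c σ_c ⊗ σ_c`. -/
theorem depolarizing_group_average :
    (∀ a : Fin 3, (Glist.map fun D => Dᴴ * pauli a * D).sum = 0) ∧
    (∀ a b : Fin 3,
      ((48 : ℂ))⁻¹ • (Glist.map fun D => (Dᴴ * pauli a * D) ⊗ₖ (Dᴴ * pauli b * D)).sum =
        (if a = b then (1 : ℂ) else 0) •
          ((3 : ℂ))⁻¹ • ∑ c : Fin 3, pauli c ⊗ₖ pauli c) := by
  have hl := isLeftInvariant_Glist_quarterTurn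
  refine ⟨twirl_pauli_eq_zero hl, fun a b => ?_⟩
  rw [← twirl_kronecker]
  rcases eq_or_ne a b with rfl | hab
  · rw [twirl_pauli_kronecker_self hl conjTranspose_mul_self_of_mem_Glist, if_pos rfl,
      length_Glist, one_smul, smul_smul]
    norm_num
  · rw [twirl_pauli_kronecker_of_ne hl hab, if_neg hab, smul_zero, zero_smul]

end
end

section
/- For all natural numbers N and k: ∑_{r=0}^{k} ∑_{p=0}^{r} (−1)^{r−p} · (N+k)! / ((k−r)! · (r−p)! · (N+p)!) = 1. -/
/-!
For any sequence `a` with generating function `A(X) = ∑ a p X ^ p`, the sum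
`∑ r ≤ k, ∑ p ≤ r, (-1) ^ (r - p) / ((k - r)! (r - p)!) a p` is the `k`-th coefficient of
`A(X) e^(-X) e^X = A(X)`, that is, `a k`. The identity is the case `a p = (N + k)! / (N + p)!`.
-/

section PowerSeries

open Finset PowerSeries
open scoped Nat

lemma coeff_mul_exp {R : Type*} [Ring R] [Algebra ℚ R] (f : R⟦X⟧) (n : ℕ) :
    coeff n (f * exp R) = ∑ p ∈ range (n + 1), (1 / (n - p)! : ℚ) • coeff p f := by
  rw [coeff_mul, Nat.sum_antidiagonal_eq_sum_range_succ fun i j ↦ coeff i f * coeff j (exp R)]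
  simp only [coeff_exp, Algebra.smul_def, Algebra.commutes]

variable {R : Type*} [CommRing R] [Algebra ℚ R]

lemma coeff_mul_exp_neg (f : R⟦X⟧) (n : ℕ) :
    coeff n (f * evalNegHom (exp R)) =
      ∑ p ∈ range (n + 1), ((-1) ^ (n - p) / (n - p)! : ℚ) • coeff p f := by
  rw [coeff_mul, Nat.sum_antidiagonal_eq_sum_range_succ
    fun i j ↦ coeff i f * coeff j (evalNegHom (exp R))]
  refine sum_congr rfl fun p _ ↦ ?_
  simp [evalNegHom, coeff_rescale, coeff_exp, Algebra.smul_def, div_eq_mul_inv, mul_comm]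

theorem sum_sum_neg_one_pow_div_factorial_smul (a : ℕ → R) (k : ℕ) :
    ∑ r ∈ range (k + 1), ∑ p ∈ range (r + 1),
      ((-1) ^ (r - p) / ((k - r)! * (r - p)!) : ℚ) • a p = a k := by
  calc
    _ = coeff k (mk a * evalNegHom (exp R) * exp R) := by
      simp only [coeff_mul_exp, coeff_mul_exp_neg, coeff_mk, smul_sum, smul_smul,
        div_mul_div_comm, one_mul]
    _ = a k := by
      rw [mul_assoc, mul_comm (evalNegHom _), exp_mul_exp_neg_eq_one, mul_one, coeff_mk]

end PowerSeries

open scoped Nat in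
theorem inclusion_exclusion_multinomial_general {K : Type*} [Field K] [CharZero K]
    (c : ℕ → K) (hc : ∀ p, c p ≠ 0) (k : ℕ) :
    ∑ r ∈ Finset.range (k + 1), ∑ p ∈ Finset.range (r + 1),
      (-1) ^ (r - p) * c k / ((k - r)! * (r - p)! * c p) = 1 := by
  have inversion := sum_sum_neg_one_pow_div_factorial_smul (fun p ↦ c k / c p) k
  simpa only [Rat.smul_def, Rat.cast_div, Rat.cast_mul, Rat.cast_pow, Rat.cast_neg, Rat.cast_one,
    Rat.cast_natCast, div_mul_div_comm, div_self (hc k)] using inversion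

/-- **Multinomial inclusion–exclusion identity.**  For all natural numbers `N` and `k`,
`∑_{r=0}^{k} ∑_{p=0}^{r} (−1)^{r−p}·(N+k)!/((k−r)!·(r−p)!·(N+p)!) = 1`. -/
theorem inclusion_exclusion_multinomial (N k : ℕ) :
    ∑ r ∈ Finset.range (k + 1), ∑ p ∈ Finset.range (r + 1),
      (-1 : ℝ) ^ (r - p) * (Nat.factorial (N + k)) /
        ((Nat.factorial (k - r)) * (Nat.factorial (r - p)) * (Nat.factorial (N + p))) = 1 :=
  inclusion_exclusion_multinomial_general (fun p ↦ ((N + p).factorial : ℝ))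
    (fun p ↦ Nat.cast_ne_zero.mpr (N + p).factorial_ne_zero) k
end
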